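/- arXiv:1107.0123 — 2 statements merged into one kernel-verified Lean document; each statement's English description precedes it below -/
import Mathlib

section
/- Let S = {S_1,…,S_K} be a finite set of complex d×d matrices. Then S has the spectral finiteness property (i.e., there exist n ≥ 1 and a word (i_1,…,i_n) in {1,…,K}^n with ρ(S) = ρ(S_{i_1}⋯S_{i_n})^{1/n}) if and only if there exists a θ-ergodic Borel probability measure μ_* on Σ_K^+ which is extremal for S and which has at least one periodic density point ξ ∈ Σ_K^+. -/
open Filter MeasureTheory Topology
open scoped ENNReal

noncomputable section

/-- The one-sided shift on `Σ_K^+ = ℕ → Fin K`. -/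
def shift (K : ℕ) : (ℕ → Fin K) → ℕ → Fin K := fun i n => i (n + 1)

/-- The ordered product `S_{w 0} ⋯ S_{w (n-1)}` along a finite word `w`. -/
def finWordProd {d K : ℕ} (S : Fin K → Matrix (Fin d) (Fin d) ℂ) {n : ℕ}
    (w : Fin n → Fin K) : Matrix (Fin d) (Fin d) ℂ :=
  (List.ofFn fun t => S (w t)).prod

/-- The ordered product of the first `n` matrices along an infinite sequence. -/
def wordProd {d K : ℕ} (S : Fin K → Matrix (Fin d) (Fin d) ℂ)
    (i : ℕ → Fin K) (n : ℕ) : Matrix (Fin d) (Fin d) ℂ :=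
  (List.ofFn fun t : Fin n => S (i t)).prod

/-- The (usual) spectral radius of a complex matrix, as a real number. -/
def specRad {d : ℕ} (A : Matrix (Fin d) (Fin d) ℂ) : ℝ :=
  (spectralRadius ℂ A).toReal

/-- The generalized spectral radius of a finite family of matrices. -/
def genSpecRad {d K : ℕ} (S : Fin K → Matrix (Fin d) (Fin d) ℂ) : ℝ :=
  Filter.atTop.limsup fun n : ℕ =>
    ⨆ w : Fin n → Fin K, specRad (finWordProd S w) ^ ((n : ℝ)⁻¹)

/-- A submultiplicative matrix norm on `d × d` complex matrices. -/
structure MatrixNorm (d : ℕ) where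
  N : Matrix (Fin d) (Fin d) ℂ → ℝ
  nonneg : ∀ A, 0 ≤ N A
  definite : ∀ A, N A = 0 ↔ A = 0
  homog : ∀ (c : ℂ) (A), N (c • A) = ‖c‖ * N A
  triangle : ∀ A B, N (A + B) ≤ N A + N B
  submult : ∀ A B, N (A * B) ≤ N A * N B

/-- `μ` is extremal for `S` (w.r.t. the matrix norm `N`). -/
def IsExtremal {d K : ℕ} (S : Fin K → Matrix (Fin d) (Fin d) ℂ)
    (N : Matrix (Fin d) (Fin d) ℂ → ℝ) (μ : Measure (ℕ → Fin K)) : Prop :=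
  ∀ᵐ i ∂μ, Tendsto (fun n : ℕ => N (wordProd S i n) ^ ((n : ℝ)⁻¹))
    atTop (𝓝 (genSpecRad S))

/-- `x` is a density point of `μ`. -/
def DensityPoint {K : ℕ} (μ : Measure (ℕ → Fin K)) (x : ℕ → Fin K) : Prop :=
  ∀ U : Set (ℕ → Fin K), IsOpen U → x ∈ U → 0 < μ U

/-- `S` has the spectral finiteness property. -/
def HasFinitenessProperty {d K : ℕ} (S : Fin K → Matrix (Fin d) (Fin d) ℂ) : Prop :=
  ∃ n : ℕ, 1 ≤ n ∧ ∃ w : Fin n → Fin K,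
    genSpecRad S = specRad (finWordProd S w) ^ ((n : ℝ)⁻¹)

/-- `x` is periodic of period `π ≥ 1`. -/
def IsPeriodic {K : ℕ} (x : ℕ → Fin K) (π : ℕ) : Prop :=
  1 ≤ π ∧ ∀ n, x (n + π) = x n

/-! Suppose first that `ξ` is a density point of period `p` and that `ρ(S) > 0`; rescale so that
`ρ(S) = 1`. Every product of the `S_k` then has spectral radius at most `1`, so the trace is bounded
by `d` on the semigroup they generate, and hence on its bipolar `Λ`, which is again a semigroup.
Each element of `Λ` is bounded modulo the radical of the trace form on the algebra spanned by the
semigroup. This radical is a nilpotent ideal, so products of `n` elements taken from a bounded part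
of `Λ` grow subexponentially in `n`.

If the product `B` over one period of `ξ` had spectral radius less than `1`, then `B ^ k → 0`, and
`c • B ^ k` would lie in `Λ` for some `c` with `‖c‖ > 1` and some `k > 0`. Inserting a factor `c`
whenever an extremal sequence follows `ξ` for `k` periods keeps the product in `Λ`, so such visits
have frequency zero. By invariance the corresponding cylinder around `ξ` is then null, which
contradicts that `ξ` is a density point.

Conversely, an optimal word repeated periodically carries the uniform measure on its orbit. -/

section Growth

open scoped Pointwise

variable {R : Type*} [NormedRing R] {F : Set R} {b C : ℝ}

lemma norm_le_pow_of_mem_pow_succ (hF : ∀ x ∈ F, ‖x‖ ≤ b) (n : ℕ) {x : R} (hx : x ∈ F ^ (n + 1)) :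
    ‖x‖ ≤ b ^ (n + 1) := by
  induction n generalizing x with
  | zero => simpa using hF x (by simpa using hx)
  | succ n ih =>
    rw [pow_succ] at hx
    obtain ⟨y, hy, z, hz, rfl⟩ := Set.mem_mul.1 hx
    rw [pow_succ]
    exact (norm_mul_le y z).trans (mul_le_mul (ih hy) (hF z hz) (norm_nonneg z)
      ((norm_nonneg y).trans (ih hy)))

lemma exists_norm_le_of_mem_pow (hF : ∀ x ∈ F, ‖x‖ ≤ b) (n : ℕ) :
    ∃ c, ∀ x ∈ F ^ n, ‖x‖ ≤ c := by
  cases n with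
  | zero => exact ⟨‖(1 : R)‖, by simp⟩
  | succ n => exact ⟨b ^ (n + 1), fun x hx => norm_le_pow_of_mem_pow_succ hF n hx⟩

lemma exists_mem_ideal_pow_norm_sub_le {J : Ideal R} (hb : 1 ≤ b) (hF : ∀ x ∈ F, ‖x‖ ≤ b)
    (hJ : ∀ x ∈ F, ∃ g ∈ J, ‖x - g‖ ≤ C) (n : ℕ) {x : R} (hx : x ∈ F ^ (n + 1)) :
    ∃ g ∈ J ^ (n + 1), ‖x - g‖ ≤ ((1 + C) ^ (n + 1) - 1) * b ^ n := by
  induction n generalizing x with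
  | zero =>
    obtain ⟨g, hg, hxg⟩ := hJ x (by simpa using hx)
    exact ⟨g, by simpa only [zero_add, Submodule.pow_one] using hg, by simpa using hxg⟩
  | succ n ih =>
    rw [pow_succ] at hx
    obtain ⟨y, hy, z, hz, rfl⟩ := Set.mem_mul.1 hx
    obtain ⟨g, hg, hyg⟩ := ih hy
    obtain ⟨h, hh, hzh⟩ := hJ z hz
    have hC : 0 ≤ C := (norm_nonneg _).trans hzh
    have hh_norm : ‖h‖ ≤ (1 + C) * b :=
      calc ‖h‖ ≤ ‖z‖ + ‖z - h‖ := norm_le_norm_add_norm_sub z h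
        _ ≤ b + C * b := add_le_add (hF z hz) (hzh.trans (le_mul_of_one_le_right hC hb))
        _ = (1 + C) * b := by ring
    refine ⟨g * h, by rw [Submodule.pow_succ]; exact Ideal.mul_mem_mul hg hh, ?_⟩
    calc ‖y * z - g * h‖ = ‖y * (z - h) + (y - g) * h‖ := by congr 1; noncomm_ring
      _ ≤ ‖y‖ * ‖z - h‖ + ‖y - g‖ * ‖h‖ :=
        (norm_add_le _ _).trans (add_le_add (norm_mul_le _ _) (norm_mul_le _ _))
      _ ≤ b ^ (n + 1) * C + ((1 + C) ^ (n + 1) - 1) * b ^ n * ((1 + C) * b) :=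
        add_le_add
          (mul_le_mul (norm_le_pow_of_mem_pow_succ hF n hy) hzh (norm_nonneg _) (by positivity))
          (mul_le_mul hyg hh_norm (norm_nonneg _) ((norm_nonneg _).trans hyg))
      _ = ((1 + C) ^ (n + 1 + 1) - 1) * b ^ (n + 1) := by ring

/-- A product of length `L + 1` loses one power of the bound `b` on its factors. -/
lemma norm_le_of_mem_pow_succ_of_ideal_pow_eq_bot {J : Ideal R} {L : ℕ} (hL : J ^ (L + 1) = ⊥)
    (hb : 1 ≤ b) (hF : ∀ x ∈ F, ‖x‖ ≤ b) (hJ : ∀ x ∈ F, ∃ g ∈ J, ‖x - g‖ ≤ C) {x : R}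
    (hx : x ∈ F ^ (L + 1)) :
    ‖x‖ ≤ ((1 + C) ^ (L + 1) - 1) * b ^ L := by
  obtain ⟨g, hg, hxg⟩ := exists_mem_ideal_pow_norm_sub_le hb hF hJ L hx
  have hg0 : g = 0 := by simpa [hL] using hg
  simpa [hg0] using hxg

lemma tendsto_div_atTop_zero_of_subadditive {u : ℕ → ℝ} (hu : Subadditive u) (hu0 : ∀ n, 0 ≤ u n)
    {c : ℝ} {L : ℕ} (h : ∀ n, u (n * (L + 1)) ≤ c + L * u n) :
    Tendsto (fun n => u n / n) atTop (𝓝 0) := by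
  have hbdd : BddBelow (Set.range fun n => u n / n) :=
    ⟨0, Set.forall_mem_range.2 fun n => div_nonneg (hu0 n) n.cast_nonneg⟩
  have hlim := hu.tendsto_lim hbdd
  have hlim0 : 0 ≤ hu.lim := ge_of_tendsto' hlim fun n => div_nonneg (hu0 n) n.cast_nonneg
  have hle : (L + 1) * hu.lim ≤ 0 + L * hu.lim := by
    have hmul : Tendsto (fun n : ℕ => n * (L + 1)) atTop atTop :=
      tendsto_id.atTop_mul_const' L.succ_pos
    refine le_of_tendsto_of_tendsto ((hlim.comp hmul).const_mul ((L : ℝ) + 1))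
      ((tendsto_const_div_atTop_nhds_zero_nat c).add (hlim.const_mul (L : ℝ))) ?_
    filter_upwards [eventually_gt_atTop 0] with n hn
    have hn' : (0 : ℝ) < n := by positivity
    have hleft : ((L : ℝ) + 1) * (u (n * (L + 1)) / (n * (L + 1) : ℕ)) = u (n * (L + 1)) / n := by
      push_cast; field_simp
    rw [Function.comp_apply, hleft, ← mul_div_assoc, ← add_div]
    exact div_le_div_of_nonneg_right (h n) hn'.le
  rwa [le_antisymm (by linarith) hlim0] at hlim

end Growth

section SubexponentialGrowth

open Real
open scoped Pointwise

variable {R : Type*} [NormedRing R] {F : Set R}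

/-- The largest positive logarithm `log⁺ ‖x‖` over the `n`-fold products `x` of elements of `F`. It
is `0` when these logarithms are unbounded. -/
def logGrowth (F : Set R) (n : ℕ) : ℝ := ⨆ x : ↥(F ^ n), log⁺ ‖(x : R)‖

lemma logGrowth_nonneg (F : Set R) (n : ℕ) : 0 ≤ logGrowth F n :=
  Real.iSup_nonneg fun _ => posLog_nonneg

lemma posLog_norm_le_logGrowth {b : ℝ} (hF : ∀ x ∈ F, ‖x‖ ≤ b) {n : ℕ} {x : R} (hx : x ∈ F ^ n) :
    log⁺ ‖x‖ ≤ logGrowth F n := by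
  obtain ⟨c, hc⟩ := exists_norm_le_of_mem_pow hF n
  exact le_ciSup (f := fun x : ↥(F ^ n) => log⁺ ‖(x : R)‖)
    ⟨log⁺ c, Set.forall_mem_range.2 fun x => posLog_le_posLog (norm_nonneg _) (hc x x.2)⟩ ⟨x, hx⟩

lemma norm_le_exp_logGrowth {b : ℝ} (hF : ∀ x ∈ F, ‖x‖ ≤ b) {n : ℕ} {x : R} (hx : x ∈ F ^ n) :
    ‖x‖ ≤ exp (logGrowth F n) :=
  (le_exp_log _).trans (exp_le_exp.2 ((le_max_right _ _).trans (posLog_norm_le_logGrowth hF hx)))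

lemma subadditive_logGrowth {b : ℝ} (hF : ∀ x ∈ F, ‖x‖ ≤ b) : Subadditive (logGrowth F) := by
  refine fun m n => Real.iSup_le (fun ⟨x, hx⟩ => ?_)
    (add_nonneg (logGrowth_nonneg F m) (logGrowth_nonneg F n))
  rw [pow_add] at hx
  obtain ⟨y, hy, z, hz, rfl⟩ := Set.mem_mul.1 hx
  calc log⁺ ‖y * z‖ ≤ log⁺ (‖y‖ * ‖z‖) := posLog_le_posLog (norm_nonneg _) (norm_mul_le y z)
    _ ≤ log⁺ ‖y‖ + log⁺ ‖z‖ := posLog_mul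
    _ ≤ logGrowth F m + logGrowth F n :=
      add_le_add (posLog_norm_le_logGrowth hF hy) (posLog_norm_le_logGrowth hF hz)

lemma logGrowth_mul_succ_le {b C : ℝ} {J : Ideal R} {L : ℕ} (hL : J ^ (L + 1) = ⊥)
    (hF : ∀ x ∈ F, ‖x‖ ≤ b) (hJ : ∀ n, ∀ x ∈ F ^ n, ∃ g ∈ J, ‖x - g‖ ≤ C) (n : ℕ) :
    logGrowth F (n * (L + 1)) ≤ log⁺ ((1 + C) ^ (L + 1) - 1) + L * logGrowth F n := by
  have hu := logGrowth_nonneg F n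
  refine Real.iSup_le (fun ⟨x, hx⟩ => ?_) (add_nonneg posLog_nonneg (by positivity))
  rw [pow_mul] at hx
  have hnorm : ‖x‖ ≤ ((1 + C) ^ (L + 1) - 1) * exp (logGrowth F n) ^ L :=
    norm_le_of_mem_pow_succ_of_ideal_pow_eq_bot hL (one_le_exp hu)
      (fun y hy => norm_le_exp_logGrowth hF hy) (hJ n) hx
  calc log⁺ ‖x‖ ≤ log⁺ (((1 + C) ^ (L + 1) - 1) * exp (logGrowth F n) ^ L) :=
        posLog_le_posLog (norm_nonneg x) hnorm
    _ ≤ log⁺ ((1 + C) ^ (L + 1) - 1) + log⁺ (exp (logGrowth F n) ^ L) := posLog_mul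
    _ = log⁺ ((1 + C) ^ (L + 1) - 1) + L * logGrowth F n := by
      rw [posLog_pow, posLog_apply (x := exp _), log_exp, max_eq_right hu]

theorem eventually_forall_mem_pow_norm_le_exp {b C : ℝ} {J : Ideal R} (hJnil : IsNilpotent J)
    (hF : ∀ x ∈ F, ‖x‖ ≤ b) (hJ : ∀ n, ∀ x ∈ F ^ n, ∃ g ∈ J, ‖x - g‖ ≤ C) {ε : ℝ} (hε : 0 < ε) :
    ∀ᶠ n : ℕ in atTop, ∀ x ∈ F ^ n, ‖x‖ ≤ exp (ε * n) := by
  obtain ⟨L, hL⟩ := hJnil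
  have hL' : J ^ (L + 1) = ⊥ := by
    rw [Submodule.pow_succ, hL, Ideal.zero_eq_bot, Ideal.bot_mul]
  have hlim := tendsto_div_atTop_zero_of_subadditive (subadditive_logGrowth hF)
    (logGrowth_nonneg F) (logGrowth_mul_succ_le hL' hF hJ)
  filter_upwards [hlim.eventually_le_const hε, eventually_gt_atTop 0] with n hn hn0 x hx
  have hn' : (0 : ℝ) < n := by positivity
  exact (norm_le_exp_logGrowth hF hx).trans (exp_le_exp.2 ((div_le_iff₀ hn').1 hn))

end SubexponentialGrowth

section TraceRadical

open scoped Pointwise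

lemma isNilpotent_ideal_of_forall_isNilpotent {R : Type*} [Ring R] [IsArtinianRing R] {J : Ideal R}
    (hJ : ∀ x ∈ J, IsNilpotent x) : IsNilpotent J := by
  have hle : J ≤ Ideal.jacobson ⊥ := by
    refine fun x hx => Ideal.mem_jacobson_iff.2 fun y => ?_
    obtain ⟨v, hv⟩ := (hJ _ (J.mul_mem_left y hx)).isUnit_one_add
    have hinv : (↑v⁻¹ : R) * (1 + y * x) = 1 := by rw [← hv, Units.inv_mul]
    refine ⟨↑v⁻¹, (Submodule.mem_bot R).2 (sub_eq_zero.2 ?_)⟩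
    rw [← hinv]
    noncomm_ring
  obtain ⟨n, hn⟩ := IsArtinianRing.isNilpotent_jacobson_bot (R := R)
  exact ⟨n, le_bot_iff.1 ((Ideal.pow_right_mono hle n).trans_eq hn)⟩

/-- The radical of the trace form `(x, y) ↦ tr (x * y)`, as a left ideal. -/
def traceRadical {𝕜 R : Type*} [CommRing 𝕜] [Ring R] [Algebra 𝕜 R] (tr : R →ₗ[𝕜] 𝕜)
    (htr : ∀ x y, tr (x * y) = tr (y * x)) : Ideal R where
  carrier := {x | ∀ y, tr (x * y) = 0}
  zero_mem' y := by rw [zero_mul, map_zero]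
  add_mem' ha hb y := by rw [add_mul, map_add, ha, hb, add_zero]
  smul_mem' c x hx y := by rw [smul_eq_mul, mul_assoc, htr, mul_assoc, hx]

variable {𝕜 : Type*} [NontriviallyNormedField 𝕜] [CompleteSpace 𝕜]

lemma exists_mem_ker_norm_sub_le {E F : Type*} [NormedAddCommGroup E] [NormedSpace 𝕜 E]
    [FiniteDimensional 𝕜 E] [NormedAddCommGroup F] [NormedSpace 𝕜 F] (Φ : E →ₗ[𝕜] F) :
    ∃ C ≥ 0, ∀ x, ∃ g ∈ LinearMap.ker Φ, ‖x - g‖ ≤ C * ‖Φ x‖ := by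
  have := FiniteDimensional.complete 𝕜 E
  have := FiniteDimensional.complete 𝕜 (LinearMap.range Φ)
  obtain ⟨C, hC, h⟩ := (LinearMap.toContinuousLinearMap Φ.rangeRestrict).exists_preimage_norm_le
    Φ.surjective_rangeRestrict
  refine ⟨C, hC.le, fun x => ?_⟩
  obtain ⟨y, hy, hyx⟩ := h (Φ.rangeRestrict x)
  have hΦy : Φ y = Φ x := congrArg Subtype.val hy
  exact ⟨x - y, by rw [LinearMap.mem_ker, map_sub, hΦy, sub_self], by simpa using hyx⟩

variable {R : Type*} [NormedRing R] [NormedAlgebra 𝕜 R] [FiniteDimensional 𝕜 R]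

lemma exists_mem_traceRadical_norm_sub_le {Λ : Submonoid R}
    (hspan : Submodule.span 𝕜 (Λ : Set R) = ⊤) {tr : R →ₗ[𝕜] 𝕜}
    (htr : ∀ x y, tr (x * y) = tr (y * x)) {D : ℝ} (hD : ∀ x ∈ Λ, ‖tr x‖ ≤ D) :
    ∃ C, ∀ x ∈ Λ, ∃ g ∈ traceRadical tr htr, ‖x - g‖ ≤ C := by
  let b := Module.Basis.ofSpan hspan.ge
  have hb : ∀ j, b j ∈ Λ := fun j => Module.Basis.ofSpan_subset hspan.ge (Set.mem_range_self j)
  let _ := FiniteDimensional.fintypeBasisIndex b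
  let Φ : R →ₗ[𝕜] (_ → 𝕜) := LinearMap.pi fun j => tr ∘ₗ LinearMap.mulRight 𝕜 (b j)
  obtain ⟨C, hC, h⟩ := exists_mem_ker_norm_sub_le Φ
  have hD0 : 0 ≤ D := (norm_nonneg _).trans (hD 1 Λ.one_mem)
  refine ⟨C * D, fun x hx => ?_⟩
  obtain ⟨g, hg, hxg⟩ := h x
  refine ⟨g, fun y => ?_, hxg.trans (mul_le_mul_of_nonneg_left ?_ hC)⟩
  · have hgb : tr ∘ₗ LinearMap.mulLeft 𝕜 g = 0 := b.ext fun j => congrFun hg j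
    exact LinearMap.congr_fun hgb y
  · exact (pi_norm_le_iff_of_nonneg hD0).2 fun j => hD _ (Λ.mul_mem hx (hb j))

/-- Modulo the radical of the trace form, which is nilpotent, the semigroup `Λ` is bounded. -/
theorem eventually_forall_mem_pow_norm_le_exp_of_trace {Λ : Submonoid R}
    (hspan : Submodule.span 𝕜 (Λ : Set R) = ⊤) {tr : R →ₗ[𝕜] 𝕜}
    (htr : ∀ x y, tr (x * y) = tr (y * x)) (hnil : ∀ x, (∀ y, tr (x * y) = 0) → IsNilpotent x)
    {D : ℝ} (hD : ∀ x ∈ Λ, ‖tr x‖ ≤ D) {F : Set R} (hFΛ : F ⊆ Λ) {b : ℝ} (hF : ∀ x ∈ F, ‖x‖ ≤ b)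
    {ε : ℝ} (hε : 0 < ε) :
    ∀ᶠ n : ℕ in atTop, ∀ x ∈ F ^ n, ‖x‖ ≤ Real.exp (ε * n) := by
  have : IsArtinianRing R := IsArtinianRing.of_finite 𝕜 R
  obtain ⟨C, hC⟩ := exists_mem_traceRadical_norm_sub_le hspan htr hD
  exact eventually_forall_mem_pow_norm_le_exp
    (isNilpotent_ideal_of_forall_isNilpotent (J := traceRadical tr htr) hnil) hF
    (fun n x hx => hC x (Λ.pow_subset hFΛ hx)) hε

end TraceRadical

section Bipolar

/-- The elements `x` on which every linear functional is bounded by each of its bounds on the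
semigroup `Γ`: for `R` finite-dimensional over `ℂ`, its closed absolutely convex hull. -/
def bipolar (𝕜 : Type*) {R : Type*} [NormedField 𝕜] [Ring R] [Algebra 𝕜 R] (Γ : Submonoid R) :
    Submonoid R where
  carrier := {x | ∀ (φ : R →ₗ[𝕜] 𝕜) (M : ℝ), (∀ y ∈ Γ, ‖φ y‖ ≤ M) → ‖φ x‖ ≤ M}
  one_mem' _ _ h := h 1 Γ.one_mem
  mul_mem' {_ b} ha hb φ M h :=
    ha (φ ∘ₗ LinearMap.mulRight 𝕜 b) M fun y hy =>
      hb (φ ∘ₗ LinearMap.mulLeft 𝕜 y) M fun z hz => h (y * z) (Γ.mul_mem hy hz)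

lemma le_bipolar {𝕜 R : Type*} [NormedField 𝕜] [Ring R] [Algebra 𝕜 R] (Γ : Submonoid R) :
    Γ ≤ bipolar 𝕜 Γ :=
  fun x hx _ _ h => h x hx

lemma bipolar_mem_nhds_zero {𝕜 R : Type*} [NontriviallyNormedField 𝕜] [CompleteSpace 𝕜]
    [NormedRing R] [NormedAlgebra 𝕜 R] [FiniteDimensional 𝕜 R] {Γ : Submonoid R}
    (hspan : Submodule.span 𝕜 (Γ : Set R) = ⊤) : (bipolar 𝕜 Γ : Set R) ∈ 𝓝 0 := by
  let b := Module.Basis.ofSpan hspan.ge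
  have hb : ∀ j, b j ∈ Γ := fun j => Module.Basis.ofSpan_subset hspan.ge (Set.mem_range_self j)
  let _ := FiniteDimensional.fintypeBasisIndex b
  have hcont : Continuous fun x => ∑ j, ‖b.coord j x‖ :=
    continuous_finsetSum _ fun j _ => (b.coord j).continuous_of_finiteDimensional.norm
  have hsmall : {x | ∑ j, ‖b.coord j x‖ < 1} ∈ 𝓝 (0 : R) :=
    (isOpen_Iio.preimage hcont).mem_nhds (by simp)
  refine mem_of_superset hsmall fun x hx φ M hM => ?_
  have hM0 : 0 ≤ M := (norm_nonneg _).trans (hM 1 Γ.one_mem)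
  calc ‖φ x‖ = ‖∑ j, b.coord j x * φ (b j)‖ := by
        conv_lhs => rw [← b.sum_repr x]
        simp only [map_sum, map_smul, smul_eq_mul, Module.Basis.coord_apply]
    _ ≤ ∑ j, ‖b.coord j x‖ * M := norm_sum_le_of_le _ fun j _ => by
        rw [norm_mul]
        exact mul_le_mul_of_nonneg_left (hM _ (hb j)) (norm_nonneg _)
    _ = (∑ j, ‖b.coord j x‖) * M := (Finset.sum_mul ..).symm
    _ ≤ M := mul_le_of_le_one_left hM0 hx.le

end Bipolar

section Cocycle

variable {K : ℕ}

/-- The ordered product `T_{i 0} ⋯ T_{i (n-1)}` along an infinite sequence, in any monoid. -/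
def cocycle {M : Type*} [Monoid M] (T : Fin K → M) (i : ℕ → Fin K) (n : ℕ) : M :=
  (List.ofFn fun t : Fin n => T (i t)).prod

lemma shift_iterate_apply (i : ℕ → Fin K) (m k : ℕ) : (shift K)^[m] i k = i (m + k) := by
  induction m generalizing k with
  | zero => simp
  | succ m ih => rw [Function.iterate_succ_apply', shift, ih, add_right_comm, add_assoc]

lemma isPeriodicPt_shift_iff {ξ : ℕ → Fin K} {p : ℕ} :
    Function.IsPeriodicPt (shift K) p ξ ↔ ∀ n, ξ (n + p) = ξ n := by
  simp only [Function.IsPeriodicPt, Function.IsFixedPt, funext_iff, shift_iterate_apply,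
    add_comm p]

lemma continuous_shift : Continuous (shift K) :=
  continuous_pi fun n => continuous_apply (n + 1)

variable {M : Type*} [Monoid M] (T : Fin K → M)

lemma cocycle_zero (i : ℕ → Fin K) : cocycle T i 0 = 1 := rfl

lemma cocycle_add (i : ℕ → Fin K) (m n : ℕ) :
    cocycle T i (m + n) = cocycle T i m * cocycle T ((shift K)^[m] i) n := by
  simp only [cocycle, List.ofFn_add, List.prod_append, shift_iterate_apply, Fin.val_castLE,
    Fin.val_natAdd]

lemma cocycle_congr {i j : ℕ → Fin K} {n : ℕ} (h : ∀ t < n, i t = j t) :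
    cocycle T i n = cocycle T j n := by
  simp only [cocycle, fun t : Fin n => h t t.2]

lemma cocycle_mul_of_isPeriodicPt {ξ : ℕ → Fin K} {p : ℕ}
    (hξ : Function.IsPeriodicPt (shift K) p ξ) (k : ℕ) :
    cocycle T ξ (p * k) = cocycle T ξ p ^ k := by
  induction k with
  | zero => rw [mul_zero, cocycle_zero, pow_zero]
  | succ k ih => rw [mul_add_one, cocycle_add, ih, (hξ.mul_const k).eq, pow_succ]

variable {T} in
lemma cocycle_mem {Γ : Submonoid M} (hT : ∀ k, T k ∈ Γ) (i : ℕ → Fin K) (n : ℕ) :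
    cocycle T i n ∈ Γ := by
  refine Γ.list_prod_mem fun x hx => ?_
  obtain ⟨t, rfl⟩ := List.mem_ofFn.1 hx
  exact hT _

lemma map_cocycle {N G : Type*} [Monoid N] [FunLike G M N] [MonoidHomClass G M N] (f : G)
    (i : ℕ → Fin K) (n : ℕ) : f (cocycle T i n) = cocycle (f ∘ T) i n := by
  rw [cocycle, map_list_prod, List.map_ofFn]
  rfl

open scoped Pointwise in
lemma cocycle_mem_pow (i : ℕ → Fin K) (n : ℕ) : cocycle T i n ∈ Set.range T ^ n :=
  Set.mem_pow.2 ⟨fun t => ⟨T (i t), Set.mem_range_self _⟩, rfl⟩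

lemma exists_norm_cocycle_le {R : Type*} [NormedRing R] (T : Fin K → R) (n : ℕ) :
    ∃ c, ∀ i, ‖cocycle T i n‖ ≤ c := by
  obtain ⟨b, hb⟩ := (Set.finite_range T).isBounded.exists_norm_le
  obtain ⟨c, hc⟩ := exists_norm_le_of_mem_pow hb n
  exact ⟨c, fun i => hc _ (cocycle_mem_pow T i n)⟩

open scoped Pointwise in
/-- Each visit to the cylinder of `ξ` lets one block of the product absorb a factor `c`. -/
lemma pow_birkhoffSum_smul_cocycle_mem_pow {A : Type*} [CommMonoid A] [MulAction A M]
    [IsScalarTower A M M] [SMulCommClass A M M] (c : A) (ξ i : ℕ → Fin K) (m n : ℕ) :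
    c ^ birkhoffSum (shift K)^[m] ((PiNat.cylinder ξ m).indicator 1) n i • cocycle T i (m * n) ∈
      (Set.range (cocycle T · m) ∪ {c • cocycle T ξ m}) ^ n := by
  induction n with
  | zero => simp [cocycle_zero]
  | succ n ih =>
    rw [pow_succ, birkhoffSum_succ, mul_add_one, cocycle_add, pow_add, ← smul_mul_smul_comm,
      ← Function.iterate_mul]
    refine Set.mul_mem_mul ih ?_
    by_cases hvisit : (shift K)^[m * n] i ∈ PiNat.cylinder ξ m
    · rw [Set.indicator_of_mem hvisit, cocycle_congr T (PiNat.mem_cylinder_iff.1 hvisit),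
        Pi.one_apply, pow_one]
      exact Or.inr rfl
    · rw [Set.indicator_of_notMem hvisit, pow_zero, one_smul]
      exact Or.inl (Set.mem_range_self _)

end Cocycle

section BirkhoffAverage

lemma natCast_birkhoffSum_indicator_one {α : Type*} (f : α → α) (U : Set α) (n : ℕ) (x : α) :
    ((birkhoffSum f (U.indicator (1 : α → ℕ)) n x : ℕ) : ℝ) =
      birkhoffSum f (U.indicator (1 : α → ℝ)) n x := by
  classical simp [birkhoffSum, Set.indicator_apply]

lemma norm_birkhoffAverage_le {α E : Type*} [NormedAddCommGroup E] [NormedSpace ℝ E] (f : α → α)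
    {g : α → E} {C : ℝ} (hC : 0 ≤ C) (hg : ∀ x, ‖g x‖ ≤ C) (n : ℕ) (x : α) :
    ‖birkhoffAverage ℝ f g n x‖ ≤ C := by
  rw [birkhoffAverage, norm_smul, norm_inv, RCLike.norm_natCast]
  refine inv_mul_le_of_le_mul₀ n.cast_nonneg hC ?_
  calc ‖birkhoffSum f g n x‖ ≤ ∑ _k ∈ Finset.range n, C := norm_sum_le_of_le _ fun k _ => hg _
    _ = n * C := by simp

variable {α : Type*} [MeasurableSpace α] {μ : Measure α} {f : α → α}

lemma integral_birkhoffAverage {E : Type*} [NormedAddCommGroup E] [NormedSpace ℝ E]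
    (hf : MeasurePreserving f μ μ) {g : α → E} (hg : Integrable g μ) {n : ℕ} (hn : n ≠ 0) :
    ∫ x, birkhoffAverage ℝ f g n x ∂μ = ∫ x, g x ∂μ := by
  have hint : ∀ k, Integrable (fun x => g (f^[k] x)) μ := fun k =>
    (hf.iterate k).integrable_comp_of_integrable hg
  have hterm : ∀ k, ∫ x, g (f^[k] x) ∂μ = ∫ x, g x ∂μ := fun k => by
    have hmap := (hf.iterate k).map_eq
    rw [← integral_map (hf.iterate k).aemeasurable (by rw [hmap]; exact hg.1), hmap]
  simp only [birkhoffAverage, birkhoffSum, integral_smul, integral_finsetSum _ fun k _ => hint k,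
    hterm, Finset.sum_const, Finset.card_range]
  rw [← Nat.cast_smul_eq_nsmul ℝ, inv_smul_smul₀ (Nat.cast_ne_zero.2 hn)]

lemma measure_eq_zero_of_ae_tendsto_birkhoffAverage_indicator [IsFiniteMeasure μ]
    (hf : MeasurePreserving f μ μ) {U : Set α} (hU : MeasurableSet U)
    (h : ∀ᵐ x ∂μ, Tendsto (birkhoffAverage ℝ f (U.indicator (1 : α → ℝ)) · x) atTop (𝓝 0)) :
    μ U = 0 := by
  set g : α → ℝ := U.indicator 1
  have hg : Measurable g := measurable_one.indicator hU
  have hg_norm : ∀ x, ‖g x‖ ≤ 1 := fun x => (norm_indicator_le_norm_self 1 x).trans norm_one.le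
  have hmeas : ∀ n, Measurable (birkhoffAverage ℝ f g n) := fun n =>
    (Finset.measurable_sum _ fun k _ => hg.comp (hf.measurable.iterate k)).const_smul (n : ℝ)⁻¹
  have hlim : Tendsto (fun n => ∫ x, birkhoffAverage ℝ f g n x ∂μ) atTop (𝓝 (∫ _, 0 ∂μ)) :=
    tendsto_integral_of_dominated_convergence (fun _ => 1)
      (fun n => (hmeas n).aestronglyMeasurable) (integrable_const 1)
      (fun n => .of_forall (norm_birkhoffAverage_le f zero_le_one hg_norm n)) h
  have hconst : ∀ᶠ n in atTop, μ.real U = ∫ x, birkhoffAverage ℝ f g n x ∂μ := by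
    filter_upwards [eventually_ne_atTop 0] with n hn
    rw [integral_birkhoffAverage hf (.of_bound hg.aestronglyMeasurable 1 (.of_forall hg_norm)) hn,
      integral_indicator_one hU]
  rw [integral_zero] at hlim
  exact (measureReal_eq_zero_iff).1
    (tendsto_nhds_unique (tendsto_const_nhds.congr' hconst) hlim)

end BirkhoffAverage

section GrowthRate

lemma eventually_pos_of_tendsto_rpow_inv {a : ℕ → ℝ} {r : ℝ} (ha : ∀ n, 0 ≤ a n) (hr : 0 < r)
    (h : Tendsto (fun n : ℕ => a n ^ (n : ℝ)⁻¹) atTop (𝓝 r)) : ∀ᶠ n in atTop, 0 < a n := by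
  filter_upwards [h.eventually_const_lt hr, eventually_ne_atTop 0] with n hn hn0
  refine (ha n).lt_of_ne' fun h0 => hn.ne' ?_
  rw [h0, Real.zero_rpow (by positivity)]

lemma tendsto_log_div_of_tendsto_rpow_inv {a : ℕ → ℝ} {r : ℝ} (ha : ∀ n, 0 ≤ a n) (hr : 0 < r)
    (h : Tendsto (fun n : ℕ => a n ^ (n : ℝ)⁻¹) atTop (𝓝 r)) :
    Tendsto (fun n : ℕ => Real.log (a n) / n) atTop (𝓝 (Real.log r)) := by
  refine (h.log hr.ne').congr' ?_
  filter_upwards [eventually_pos_of_tendsto_rpow_inv ha hr h] with n hpos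
  rw [Real.log_rpow hpos, inv_mul_eq_div]

lemma tendsto_rpow_inv_comp {a : ℕ → ℝ} {r s : ℝ} (ha : ∀ n, 0 ≤ a n)
    (h : Tendsto (fun n : ℕ => a n ^ (n : ℝ)⁻¹) atTop (𝓝 r)) {g : ℕ → ℕ}
    (hg : Tendsto g atTop atTop) (hgs : Tendsto (fun n => (g n : ℝ) / n) atTop (𝓝 s))
    (hs : 0 < s) : Tendsto (fun n => a (g n) ^ (n : ℝ)⁻¹) atTop (𝓝 (r ^ s)) := by
  refine ((h.comp hg).rpow hgs (Or.inr hs)).congr' ?_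
  filter_upwards [hg.eventually_ne_atTop 0] with n hn
  rw [Function.comp_apply, ← Real.rpow_mul (ha _), inv_mul_eq_div,
    div_div_cancel_left' (Nat.cast_ne_zero.2 hn)]

lemma tendsto_div_atTop_zero_of_pow_mul_le_exp {a : ℕ → ℝ} (ha : ∀ n, 0 ≤ a n)
    (h : Tendsto (fun n : ℕ => a n ^ (n : ℝ)⁻¹) atTop (𝓝 1)) {q : ℝ} (hq : 1 < q) {v : ℕ → ℕ}
    (hv : ∀ ε > 0, ∀ᶠ n : ℕ in atTop, q ^ v n * a n ≤ Real.exp (ε * n)) :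
    Tendsto (fun n => (v n : ℝ) / n) atTop (𝓝 0) := by
  have hlogq : 0 < Real.log q := Real.log_pos hq
  have hloga := tendsto_log_div_of_tendsto_rpow_inv ha one_pos h
  rw [Real.log_one] at hloga
  refine tendsto_order.2 ⟨fun c hc => .of_forall fun n => hc.trans_le (by positivity),
    fun c hc => ?_⟩
  have hε : 0 < c * Real.log q / 2 := by positivity
  filter_upwards [hv _ hε, hloga.eventually_const_lt (neg_lt_zero.2 hε),
    eventually_pos_of_tendsto_rpow_inv ha one_pos h, eventually_gt_atTop 0] with n hn hlog hapos hn0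
  have hn' : (0 : ℝ) < n := by positivity
  have hsum : v n * Real.log q + Real.log (a n) ≤ c * Real.log q / 2 * n := by
    rwa [← Real.log_pow, ← Real.log_mul (by positivity) hapos.ne',
      Real.log_le_iff_le_exp (by positivity)]
  rw [lt_div_iff₀ hn'] at hlog
  rw [div_lt_iff₀ hn']
  exact lt_of_mul_lt_mul_right (by linarith) hlogq.le

end GrowthRate

section DensityPoints

variable {𝕜 R : Type*} [NontriviallyNormedField 𝕜] [CompleteSpace 𝕜] [NormedRing R]
  [NormedAlgebra 𝕜 R] [FiniteDimensional 𝕜 R] {K : ℕ} {T : Fin K → R} {tr : R →ₗ[𝕜] 𝕜} {D : ℝ}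
  {μ : Measure (ℕ → Fin K)} [IsFiniteMeasure μ] {ξ : ℕ → Fin K}

lemma tendsto_birkhoffAverage_indicator_cylinder {Λ : Submonoid R}
    (hspan : Submodule.span 𝕜 (Λ : Set R) = ⊤) (htr : ∀ x y, tr (x * y) = tr (y * x))
    (hnil : ∀ x, (∀ y, tr (x * y) = 0) → IsNilpotent x) (hD : ∀ x ∈ Λ, ‖tr x‖ ≤ D)
    (hT : ∀ k, T k ∈ Λ) {m : ℕ} (hm : 0 < m) {c : 𝕜} (hc : 1 < ‖c‖)
    (hcξ : c • cocycle T ξ m ∈ Λ) {i : ℕ → Fin K}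
    (hi : Tendsto (fun n : ℕ => ‖cocycle T i n‖ ^ (n : ℝ)⁻¹) atTop (𝓝 1)) :
    Tendsto (birkhoffAverage ℝ (shift K)^[m]
      ((PiNat.cylinder ξ m).indicator (1 : (ℕ → Fin K) → ℝ)) · i) atTop (𝓝 0) := by
  set F : Set R := Set.range (cocycle T · m) ∪ {c • cocycle T ξ m}
  have hFΛ : F ⊆ Λ := Set.union_subset (Set.range_subset_iff.2 fun j => cocycle_mem hT j m)
    (Set.singleton_subset_iff.2 hcξ)
  obtain ⟨b, hb⟩ := exists_norm_cocycle_le T m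
  have hF : ∀ x ∈ F, ‖x‖ ≤ max b ‖c • cocycle T ξ m‖ := by
    rintro x (⟨j, rfl⟩ | rfl)
    exacts [(hb j).trans (le_max_left _ _), le_max_right _ _]
  set visits : ℕ → ℕ := fun n =>
    birkhoffSum (shift K)^[m] ((PiNat.cylinder ξ m).indicator 1) n i
  have hroot : Tendsto (fun n : ℕ => ‖cocycle T i (m * n)‖ ^ (n : ℝ)⁻¹) atTop (𝓝 1) := by
    have hratio : Tendsto (fun n : ℕ => ((m * n : ℕ) : ℝ) / n) atTop (𝓝 m) :=
      tendsto_const_nhds.congr' <| by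
        filter_upwards [eventually_ne_atTop 0] with n hn
        rw [Nat.cast_mul, mul_div_cancel_right₀ _ (Nat.cast_ne_zero.2 hn)]
    have := tendsto_rpow_inv_comp (fun _ => norm_nonneg _) hi (tendsto_id.const_mul_atTop' hm)
      hratio (Nat.cast_pos.2 hm)
    rwa [Real.one_rpow] at this
  have hvisits := tendsto_div_atTop_zero_of_pow_mul_le_exp (fun _ => norm_nonneg _) hroot hc
    (v := visits) fun ε hε => by
      filter_upwards [eventually_forall_mem_pow_norm_le_exp_of_trace hspan htr hnil hD hFΛ hF hε]
        with n hn
      simpa only [norm_smul, norm_pow] using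
        hn _ (pow_birkhoffSum_smul_cocycle_mem_pow T c ξ i m n)
  refine hvisits.congr fun n => ?_
  rw [birkhoffAverage, smul_eq_mul, div_eq_inv_mul, natCast_birkhoffSum_indicator_one]

theorem not_tendsto_cocycle_pow_zero_of_densityPoint {Γ : Submonoid R}
    (hspan : Submodule.span 𝕜 (Γ : Set R) = ⊤) (htr : ∀ x y, tr (x * y) = tr (y * x))
    (hnil : ∀ x, (∀ y, tr (x * y) = 0) → IsNilpotent x) (hD : ∀ x ∈ Γ, ‖tr x‖ ≤ D)
    (hT : ∀ k, T k ∈ Γ) (hμ : MeasurePreserving (shift K) μ μ)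
    (hext : ∀ᵐ i ∂μ, Tendsto (fun n : ℕ => ‖cocycle T i n‖ ^ (n : ℝ)⁻¹) atTop (𝓝 1)) {p : ℕ}
    (hξ : IsPeriodic ξ p) (hdens : DensityPoint μ ξ) :
    ¬ Tendsto (fun k : ℕ => cocycle T ξ p ^ k) atTop (𝓝 0) := by
  intro hlim
  obtain ⟨c, hc⟩ := NormedField.exists_one_lt_norm 𝕜
  have hclim : Tendsto (fun k => c • cocycle T ξ p ^ k) atTop (𝓝 0) := by
    simpa only [smul_zero] using hlim.const_smul c
  obtain ⟨k, hck, hk⟩ :=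
    ((hclim.eventually_mem (bipolar_mem_nhds_zero hspan)).and (eventually_gt_atTop 0)).exists
  rw [← cocycle_mul_of_isPeriodicPt T (isPeriodicPt_shift_iff.2 hξ.2)] at hck
  have hspan' : Submodule.span 𝕜 (bipolar 𝕜 Γ : Set R) = ⊤ :=
    top_le_iff.1 (hspan.ge.trans (Submodule.span_mono (le_bipolar Γ)))
  have hcyl := PiNat.isOpen_cylinder (fun _ => Fin K) ξ (p * k)
  refine (hdens _ hcyl (PiNat.self_mem_cylinder ξ _)).ne'
    (measure_eq_zero_of_ae_tendsto_birkhoffAverage_indicator (hμ.iterate (p * k))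
      hcyl.measurableSet ?_)
  filter_upwards [hext] with i hi
  exact tendsto_birkhoffAverage_indicator_cylinder hspan' htr hnil (fun x hx => hx tr D hD)
    (fun j => le_bipolar Γ (hT j)) (Nat.mul_pos hξ.1 hk) hc hck hi

end DensityPoints

section SpectralRadius

lemma spectralRadius_ne_top {𝕜 R : Type*} [NormedField 𝕜] [NormedRing R] [NormedAlgebra 𝕜 R]
    [CompleteSpace R] (a : R) : spectralRadius 𝕜 a ≠ ∞ := by
  refine ne_top_of_le_ne_top ?_ (spectrum.spectralRadius_le_pow_nnnorm_pow_one_div 𝕜 a 0)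
  finiteness

lemma spectralRadius_mul_comm {𝕜 R : Type*} [NormedField 𝕜] [Ring R] [Algebra 𝕜 R] (a b : R) :
    spectralRadius 𝕜 (a * b) = spectralRadius 𝕜 (b * a) := by
  have hle : ∀ a b : R, spectralRadius 𝕜 (a * b) ≤ spectralRadius 𝕜 (b * a) := fun a b => by
    refine iSup₂_le fun z hz => ?_
    rcases eq_or_ne z 0 with rfl | hz0
    · simp
    · have hz' : z ∈ spectrum 𝕜 (b * a) \ {0} :=
        spectrum.nonzero_mul_comm (𝕜 := 𝕜) a b ▸ ⟨hz, hz0⟩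
      exact le_iSup₂_of_le z hz'.1 le_rfl
  exact (hle a b).antisymm (hle b a)

open scoped Pointwise in
lemma spectralRadius_smul {𝕜 R : Type*} [NormedField 𝕜] [Ring R] [Algebra 𝕜 R] {c : 𝕜}
    (hc : c ≠ 0) (a : R) : spectralRadius 𝕜 (c • a) = ‖c‖₊ * spectralRadius 𝕜 a := by
  have hσ : spectrum 𝕜 (c • a) = c • spectrum 𝕜 a := spectrum.unit_smul_eq_smul a (Units.mk0 c hc)
  simp only [spectralRadius, hσ, ← Set.image_smul, iSup_image, smul_eq_mul, nnnorm_mul,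
    ENNReal.coe_mul, ENNReal.mul_iSup]

variable {R : Type*} [NormedRing R] [NormedAlgebra ℂ R] [CompleteSpace R]

lemma spectralRadius_pow (a : R) {n : ℕ} (hn : n ≠ 0) :
    spectralRadius ℂ (a ^ n) = spectralRadius ℂ a ^ n := by
  nontriviality R using zero_pow hn
  simp only [spectralRadius, spectrum.map_pow, iSup_image, nnnorm_pow, ENNReal.coe_pow,
    ENNReal.iSup₂_pow_of_ne_zero _ hn]

lemma tendsto_norm_pow_rpow_inv (a : R) :
    Tendsto (fun n : ℕ => ‖a ^ n‖ ^ (n : ℝ)⁻¹) atTop (𝓝 (spectralRadius ℂ a).toReal) := by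
  have h := (ENNReal.tendsto_toReal (spectralRadius_ne_top a)).comp
    (spectrum.pow_norm_pow_one_div_tendsto_nhds_spectralRadius a)
  refine h.congr fun n => ?_
  rw [Function.comp_apply, ENNReal.toReal_ofReal (Real.rpow_nonneg (norm_nonneg _) _), one_div]

lemma toReal_spectralRadius_le_norm (a : R) : (spectralRadius ℂ a).toReal ≤ ‖a‖ := by
  refine le_of_tendsto (tendsto_norm_pow_rpow_inv a) ?_
  filter_upwards [eventually_gt_atTop 0] with n hn
  rw [← Real.pow_rpow_inv_natCast (norm_nonneg a) hn.ne']
  gcongr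
  exact norm_pow_le' a hn

lemma norm_le_toReal_spectralRadius {a : R} {z : ℂ} (hz : z ∈ spectrum ℂ a) :
    ‖z‖ ≤ (spectralRadius ℂ a).toReal := by
  have h : (‖z‖₊ : ℝ≥0∞) ≤ spectralRadius ℂ a := le_iSup₂_of_le z hz le_rfl
  simpa using ENNReal.toReal_mono (spectralRadius_ne_top a) h

lemma tendsto_pow_atTop_zero_of_spectralRadius_lt_one {a : R}
    (ha : (spectralRadius ℂ a).toReal < 1) : Tendsto (fun n : ℕ => a ^ n) atTop (𝓝 0) := by
  obtain ⟨r, har, hr⟩ := exists_between ha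
  have hr0 : 0 ≤ r := ENNReal.toReal_nonneg.trans har.le
  rw [tendsto_zero_iff_norm_tendsto_zero]
  refine squeeze_zero' (.of_forall fun n => norm_nonneg _) ?_
    (tendsto_pow_atTop_nhds_zero_of_lt_one hr0 hr)
  filter_upwards [(tendsto_norm_pow_rpow_inv a).eventually_le_const har, eventually_ne_atTop 0]
    with n hn hn0
  exact (Real.rpow_inv_le_iff_of_pos (norm_nonneg _) hr0 (by positivity)).1 hn |>.trans_eq
    (Real.rpow_natCast r n)

end SpectralRadius

section Matrices

open Polynomial in
/-- Fitting's decomposition: by Bézout, the part of the minimal polynomial prime to `X` produces an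
idempotent in `𝕜[a]` that acts as the identity on `a ^ n`. -/
lemma exists_isIdempotentElem_mul_aeval {𝕜 A : Type*} [Field 𝕜] [Ring A] [Algebra 𝕜 A] {a : A}
    (ha : IsIntegral 𝕜 a) :
    ∃ (q : 𝕜[X]) (n : ℕ), IsIdempotentElem (a * aeval a q) ∧ a ^ n * (a * aeval a q) = a ^ n := by
  obtain ⟨g, hg, hXg⟩ := exists_eq_pow_rootMultiplicity_mul_and_not_dvd (minpoly 𝕜 a)
    (minpoly.ne_zero ha) 0
  set n := rootMultiplicity 0 (minpoly 𝕜 a)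
  rw [C_0, sub_zero] at hg hXg
  obtain ⟨u, v, huv⟩ := (irreducible_X.coprime_iff_not_dvd.2 hXg).pow_left (m := n + 1)
  have heval : a * aeval a (u * X ^ n) = aeval a (u * X ^ (n + 1)) := by
    rw [pow_succ', mul_left_comm, map_mul (aeval a) X, aeval_X]
  have hkill : ∀ w, aeval a (X ^ n * w) * aeval a (v * g) = 0 := fun w => by
    rw [← map_mul, show X ^ n * w * (v * g) = w * v * (X ^ n * g) by ring, ← hg, map_mul,
      minpoly.aeval, mul_zero]
  have hone : aeval a (u * X ^ (n + 1)) = 1 - aeval a (v * g) := by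
    rw [eq_sub_iff_add_eq, ← map_add, huv, map_one]
  refine ⟨u * X ^ n, n, ?_, ?_⟩
  · have := hkill (u * X)
    rw [show X ^ n * (u * X) = u * X ^ (n + 1) by ring] at this
    rw [heval, IsIdempotentElem]
    nth_rw 2 [hone]
    rw [mul_sub, mul_one, this, sub_zero]
  · have := hkill 1
    rw [mul_one, map_pow, aeval_X] at this
    rw [heval, hone, mul_sub, mul_one, this, sub_zero]

variable {n F : Type*} [Fintype n]

lemma isIdempotentElem_matrix_eq_zero_of_trace_eq_zero [Field F] [CharZero F] {E : Matrix n n F}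
    (hE : IsIdempotentElem E) (htr : E.trace = 0) : E = 0 := by
  classical
  exact Matrix.toLin'.map_eq_zero_iff.1 <| LinearMap.IsIdempotentElem.eq_zero_of_trace_eq_zero
    (hE.map Matrix.toLinAlgEquiv') ((Matrix.trace_toLin'_eq E).trans htr)

variable [DecidableEq n]

lemma isNilpotent_of_forall_trace_mul_aeval_eq_zero [Field F] [CharZero F] {A : Matrix n n F}
    (h : ∀ q : Polynomial F, (A * Polynomial.aeval A q).trace = 0) : IsNilpotent A := by
  obtain ⟨q, k, hidem, hk⟩ :=
    exists_isIdempotentElem_mul_aeval (Algebra.IsIntegral.isIntegral (R := F) A)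
  rw [isIdempotentElem_matrix_eq_zero_of_trace_eq_zero hidem (h q), mul_zero] at hk
  exact ⟨k, hk.symm⟩

lemma norm_trace_le_of_forall_mem_spectrum [NormedField F] [IsAlgClosed F] {A : Matrix n n F}
    {r : ℝ} (hr : 0 ≤ r) (h : ∀ z ∈ spectrum F A, ‖z‖ ≤ r) : ‖A.trace‖ ≤ Fintype.card n * r := by
  have hcard : A.charpoly.roots.card ≤ Fintype.card n :=
    (Polynomial.card_roots' _).trans_eq A.charpoly_natDegree_eq_dim
  calc ‖A.trace‖ = ‖A.charpoly.roots.sum‖ := by rw [Matrix.trace_eq_sum_roots_charpoly]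
    _ ≤ (A.charpoly.roots.map norm).sum := norm_multiset_sum_le _
    _ ≤ A.charpoly.roots.card • r := by
      rw [← Multiset.card_map norm]
      refine Multiset.sum_le_card_nsmul _ r fun x hx => ?_
      obtain ⟨z, hz, rfl⟩ := Multiset.mem_map.1 hx
      exact h z (Matrix.mem_spectrum_of_isRoot_charpoly (Polynomial.isRoot_of_mem_roots hz))
    _ ≤ Fintype.card n * r := by
      rw [nsmul_eq_mul]
      gcongr

end Matrices

section Words

lemma exists_prod_ofFn_eq_of_mem_closure_range {M ι : Type*} [Monoid M] {T : ι → M} {x : M}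
    (hx : x ∈ Submonoid.closure (Set.range T)) :
    ∃ (n : ℕ) (w : Fin n → ι), (List.ofFn fun t => T (w t)).prod = x := by
  rw [← FreeMonoid.mrange_lift] at hx
  obtain ⟨l, rfl⟩ := hx
  refine ⟨l.toList.length, l.toList.get, ?_⟩
  rw [FreeMonoid.lift_apply, ← List.ofFn_getElem_eq_map]
  rfl

lemma prod_ofFn_smul {A M : Type*} [Monoid A] [Monoid M] [MulAction A M] [IsScalarTower A M M]
    [SMulCommClass A M M] (c : A) {n : ℕ} (f : Fin n → M) :
    (List.ofFn (c • f)).prod = c ^ n • (List.ofFn f).prod := by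
  have := List.smul_prod (l := List.ofFn f) (m := c)
  rwa [List.map_ofFn, List.length_ofFn, eq_comm] at this

lemma exists_isPeriodic_extension {K n : ℕ} (hn : 1 ≤ n) (w : Fin n → Fin K) :
    ∃ x : ℕ → Fin K, IsPeriodic x n ∧ (fun t : Fin n => x t) = w :=
  ⟨fun k => w ⟨k % n, Nat.mod_lt _ hn⟩, ⟨hn, fun k => by simp only [Nat.add_mod_right]⟩,
    funext fun t => congrArg w (Fin.ext (Nat.mod_eq_of_lt t.2))⟩

variable {d K : ℕ} {S : Fin K → Matrix (Fin d) (Fin d) ℂ}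

lemma finWordProd_repeat {n : ℕ} (w : Fin n → Fin K) (k : ℕ) :
    finWordProd S (Fin.repeat k w) = finWordProd S w ^ k := by
  change (List.ofFn (Fin.repeat k fun t => S (w t))).prod = _
  rw [List.ofFn_fin_repeat, List.prod_flatten, List.map_replicate, List.prod_replicate]
  rfl

lemma specRad_finWordProd_smul {c : ℂ} (hc : c ≠ 0) {n : ℕ} (w : Fin n → Fin K) :
    specRad (finWordProd (c • S) w) = ‖c‖ ^ n * specRad (finWordProd S w) := by
  have hsmul : finWordProd (c • S) w = c ^ n • finWordProd S w := prod_ofFn_smul c _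
  rw [specRad, hsmul, spectralRadius_smul (pow_ne_zero n hc), ENNReal.toReal_mul,
    ENNReal.coe_toReal, coe_nnnorm, norm_pow, specRad]

end Words

section GeneralizedSpectralRadius

attribute [local instance] Matrix.linftyOpNormedRing Matrix.linftyOpNormedAlgebra

variable {d K : ℕ} (S : Fin K → Matrix (Fin d) (Fin d) ℂ)

lemma exists_forall_specRad_finWordProd_rpow_inv_le :
    ∃ M, 0 ≤ M ∧ ∀ n ≠ 0, ∀ w : Fin n → Fin K, specRad (finWordProd S w) ^ (n : ℝ)⁻¹ ≤ M := by
  obtain ⟨b, hb⟩ := (Set.finite_range S).isBounded.exists_norm_le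
  have hM : ∀ x ∈ Set.range S, ‖x‖ ≤ max b 0 := fun x hx => (hb x hx).trans (le_max_left _ _)
  refine ⟨max b 0, le_max_right _ _, fun n hn w => ?_⟩
  obtain ⟨n, rfl⟩ := Nat.exists_eq_succ_of_ne_zero hn
  rw [← Real.pow_rpow_inv_natCast (le_max_right b 0) hn]
  refine Real.rpow_le_rpow ENNReal.toReal_nonneg ?_ (by positivity)
  exact (toReal_spectralRadius_le_norm _).trans <| norm_le_pow_of_mem_pow_succ hM n <|
    Set.mem_pow.2 ⟨fun t => ⟨S (w t), Set.mem_range_self _⟩, rfl⟩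

variable {S}

lemma specRad_finWordProd_rpow_inv_le_genSpecRad {n : ℕ} (hn : n ≠ 0) (w : Fin n → Fin K) :
    specRad (finWordProd S w) ^ (n : ℝ)⁻¹ ≤ genSpecRad S := by
  obtain ⟨M, hM0, hM⟩ := exists_forall_specRad_finWordProd_rpow_inv_le S
  have hbdd : IsBoundedUnder (· ≤ ·) atTop fun m : ℕ =>
      ⨆ v : Fin m → Fin K, specRad (finWordProd S v) ^ (m : ℝ)⁻¹ :=
    isBoundedUnder_of_eventually_le <| by
      filter_upwards [eventually_ne_atTop 0] with m hm using Real.iSup_le (hM m hm) hM0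
  have hrepeat : ∀ k ≠ 0, specRad (finWordProd S (Fin.repeat k w)) ^ ((k * n : ℕ) : ℝ)⁻¹ =
      specRad (finWordProd S w) ^ (n : ℝ)⁻¹ := fun k hk => by
    rw [finWordProd_repeat, specRad, spectralRadius_pow _ hk, ENNReal.toReal_pow, Nat.cast_mul,
      mul_inv, Real.rpow_mul (by positivity), Real.pow_rpow_inv_natCast ENNReal.toReal_nonneg hk]
    rfl
  refine le_limsup_of_frequently_le (frequently_atTop.2 fun a => ?_) hbdd
  refine ⟨(a + 1) * n, by nlinarith [Nat.pos_of_ne_zero hn], ?_⟩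
  rw [← hrepeat (a + 1) a.succ_ne_zero]
  exact le_ciSup (f := fun v : Fin ((a + 1) * n) → Fin K =>
    specRad (finWordProd S v) ^ (((a + 1) * n : ℕ) : ℝ)⁻¹) (Set.finite_range _).bddAbove _

lemma specRad_finWordProd_le_genSpecRad_pow {n : ℕ} (hn : n ≠ 0) (w : Fin n → Fin K) :
    specRad (finWordProd S w) ≤ genSpecRad S ^ n := by
  have hroot : 0 ≤ specRad (finWordProd S w) ^ (n : ℝ)⁻¹ :=
    Real.rpow_nonneg ENNReal.toReal_nonneg _
  calc specRad (finWordProd S w) = (specRad (finWordProd S w) ^ (n : ℝ)⁻¹) ^ n :=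
        (Real.rpow_inv_natCast_pow ENNReal.toReal_nonneg hn).symm
    _ ≤ genSpecRad S ^ n :=
      pow_le_pow_left₀ hroot (specRad_finWordProd_rpow_inv_le_genSpecRad hn w) n

lemma norm_trace_le_of_mem_closure_range
    (hS : ∀ n ≠ 0, ∀ w : Fin n → Fin K, specRad (finWordProd S w) ≤ 1)
    {A : Matrix (Fin d) (Fin d) ℂ} (hA : A ∈ Submonoid.closure (Set.range S)) :
    ‖A.trace‖ ≤ d := by
  obtain ⟨n, w, rfl⟩ := exists_prod_ofFn_eq_of_mem_closure_range hA
  rcases eq_or_ne n 0 with rfl | hn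
  · simp
  · have := norm_trace_le_of_forall_mem_spectrum (A := finWordProd S w) zero_le_one fun z hz =>
      (norm_le_toReal_spectralRadius hz).trans (hS n hn w)
    rwa [Fintype.card_fin, mul_one] at this

end GeneralizedSpectralRadius

section Sufficiency

open Polynomial in
theorem not_tendsto_cocycle_pow_zero_of_forall_trace_le {𝕜 R : Type*} [NontriviallyNormedField 𝕜]
    [CompleteSpace 𝕜] [NormedRing R] [NormedAlgebra 𝕜 R] [FiniteDimensional 𝕜 R] {K : ℕ}
    {T : Fin K → R} {tr : R →ₗ[𝕜] 𝕜} {D : ℝ} {μ : Measure (ℕ → Fin K)} [IsFiniteMeasure μ]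
    (htr : ∀ x y, tr (x * y) = tr (y * x))
    (hnil : ∀ x, (∀ q : 𝕜[X], tr (x * aeval x q) = 0) → IsNilpotent x)
    (hD : ∀ x ∈ Submonoid.closure (Set.range T), ‖tr x‖ ≤ D)
    (hμ : MeasurePreserving (shift K) μ μ)
    (hext : ∀ᵐ i ∂μ, Tendsto (fun n : ℕ => ‖cocycle T i n‖ ^ (n : ℝ)⁻¹) atTop (𝓝 1))
    {ξ : ℕ → Fin K} {p : ℕ} (hξ : IsPeriodic ξ p) (hdens : DensityPoint μ ξ) :
    ¬ Tendsto (fun k : ℕ => cocycle T ξ p ^ k) atTop (𝓝 0) := by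
  intro hlim
  let 𝒜 : Subalgebra 𝕜 R := Algebra.adjoin 𝕜 (Set.range T)
  let T' : Fin K → 𝒜 := fun k => ⟨T k, Algebra.subset_adjoin (Set.mem_range_self k)⟩
  let Γ : Submonoid 𝒜 := (Submonoid.closure (Set.range T)).comap 𝒜.val
  have hcoe : ∀ i n, ((cocycle T' i n : 𝒜) : R) = cocycle T i n := map_cocycle T' 𝒜.val
  have hspan : Submodule.span 𝕜 (Γ : Set 𝒜) = ⊤ := by
    rw [← top_le_iff, ← Algebra.top_toSubmodule, ← Algebra.adjoin_adjoin_coe_preimage,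
      Algebra.adjoin_eq_span]
    exact Submodule.span_mono
      (Submonoid.closure_le.2 fun x hx => Submonoid.subset_closure (s := Set.range T) hx)
  refine not_tendsto_cocycle_pow_zero_of_densityPoint (T := T') (tr := tr ∘ₗ 𝒜.val.toLinearMap)
    hspan (fun x y => htr x y) (fun x hx => ?_) (fun x hx => hD x hx)
    (fun k => Submonoid.subset_closure (Set.mem_range_self k)) hμ ?_ hξ hdens ?_
  · refine (IsNilpotent.map_iff (f := 𝒜.val) Subtype.val_injective).1 (hnil _ fun q => ?_)
    rw [aeval_algHom_apply, ← map_mul]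
    exact hx _
  · filter_upwards [hext] with i hi
    simp only [← hcoe] at hi
    exact hi
  · refine tendsto_subtype_rng.2 ?_
    simpa only [Subalgebra.coe_pow, Subalgebra.coe_zero, hcoe] using hlim

namespace MatrixNorm

variable {d K : ℕ} (ν : MatrixNorm d)

/-- A matrix norm as a bundled ring norm. -/
def ringNorm : RingNorm (Matrix (Fin d) (Fin d) ℂ) where
  toFun := ν.N
  map_zero' := (ν.definite 0).2 rfl
  add_le' := ν.triangle
  neg' A := by simpa using ν.homog (-1) A
  mul_le' := ν.submult
  eq_zero_of_map_eq_zero' A h := (ν.definite A).1 h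

/-- The normed ring structure on matrices given by a matrix norm. -/
abbrev normedRing : NormedRing (Matrix (Fin d) (Fin d) ℂ) := ν.ringNorm.toNormedRing

/-- The normed algebra structure on matrices given by a matrix norm. -/
abbrev normedAlgebra :
    @NormedAlgebra ℂ (Matrix (Fin d) (Fin d) ℂ) _ ν.normedRing.toSeminormedRing :=
  letI := ν.normedRing
  { (inferInstance : Algebra ℂ (Matrix (Fin d) (Fin d) ℂ)) with
    norm_smul_le := fun c A => (ν.homog c A).le }

theorem one_le_specRad_of_densityPoint {T : Fin K → Matrix (Fin d) (Fin d) ℂ}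
    (hT : ∀ n ≠ 0, ∀ w : Fin n → Fin K, specRad (finWordProd T w) ≤ 1)
    {μ : Measure (ℕ → Fin K)} [IsFiniteMeasure μ] (hμ : MeasurePreserving (shift K) μ μ)
    (hext : ∀ᵐ i ∂μ, Tendsto (fun n : ℕ => ν.N (wordProd T i n) ^ (n : ℝ)⁻¹) atTop (𝓝 1))
    {ξ : ℕ → Fin K} {p : ℕ} (hξ : IsPeriodic ξ p) (hdens : DensityPoint μ ξ) :
    1 ≤ specRad (wordProd T ξ p) := by
  let _ := ν.normedRing
  let _ := ν.normedAlgebra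
  have : CompleteSpace (Matrix (Fin d) (Fin d) ℂ) := FiniteDimensional.complete ℂ _
  by_contra! hlt
  exact not_tendsto_cocycle_pow_zero_of_forall_trace_le (tr := Matrix.traceLinearMap (Fin d) ℂ ℂ)
    Matrix.trace_mul_comm (fun A hA => isNilpotent_of_forall_trace_mul_aeval_eq_zero hA)
    (fun A => norm_trace_le_of_mem_closure_range hT) hμ hext hξ hdens
    (tendsto_pow_atTop_zero_of_spectralRadius_lt_one hlt)

lemma tendsto_smul_wordProd_rpow_inv {S : Fin K → Matrix (Fin d) (Fin d) ℂ} (c : ℂ) {r : ℝ}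
    {i : ℕ → Fin K}
    (h : Tendsto (fun n : ℕ => ν.N (wordProd S i n) ^ (n : ℝ)⁻¹) atTop (𝓝 r)) :
    Tendsto (fun n : ℕ => ν.N (wordProd (c • S) i n) ^ (n : ℝ)⁻¹) atTop (𝓝 (‖c‖ * r)) := by
  refine (h.const_mul ‖c‖).congr' ?_
  filter_upwards [eventually_ne_atTop 0] with n hn
  have hsmul : wordProd (c • S) i n = c ^ n • wordProd S i n := prod_ofFn_smul c _
  rw [hsmul, ν.homog, norm_pow, Real.mul_rpow (by positivity) (ν.nonneg _),
    Real.pow_rpow_inv_natCast (norm_nonneg c) hn]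

theorem hasFinitenessProperty_of_densityPoint {S : Fin K → Matrix (Fin d) (Fin d) ℂ}
    {μ : Measure (ℕ → Fin K)} [IsFiniteMeasure μ] (hμ : MeasurePreserving (shift K) μ μ)
    (hext : IsExtremal S ν.N μ) {ξ : ℕ → Fin K} {p : ℕ} (hξ : IsPeriodic ξ p)
    (hdens : DensityPoint μ ξ) : HasFinitenessProperty S := by
  have hp : p ≠ 0 := Nat.one_le_iff_ne_zero.1 hξ.1
  refine ⟨p, hξ.1, fun t => ξ t, le_antisymm ?_ (specRad_finWordProd_rpow_inv_le_genSpecRad hp _)⟩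
  rcases le_or_gt (genSpecRad S) 0 with hρ | hρ
  · exact hρ.trans (Real.rpow_nonneg ENNReal.toReal_nonneg _)
  set ρ := genSpecRad S with hρ_def
  set c : ℂ := (ρ : ℂ)⁻¹
  have hc0 : c ≠ 0 := inv_ne_zero (Complex.ofReal_ne_zero.2 hρ.ne')
  have hc : ‖c‖ = ρ⁻¹ := by rw [norm_inv, Complex.norm_real, Real.norm_of_nonneg hρ.le]
  have hone : 1 ≤ specRad (wordProd (c • S) ξ p) :=
    ν.one_le_specRad_of_densityPoint
      (fun n hn w => by
        rw [specRad_finWordProd_smul hc0, hc, inv_pow, inv_mul_le_one₀ (by positivity)]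
        exact specRad_finWordProd_le_genSpecRad_pow hn w) hμ
      (hext.mono fun i hi => by
        simpa only [hc, ← hρ_def, inv_mul_cancel₀ hρ.ne'] using
          ν.tendsto_smul_wordProd_rpow_inv c hi)
      hξ hdens
  rw [wordProd, ← finWordProd, specRad_finWordProd_smul hc0, hc, inv_pow,
    one_le_inv_mul₀ (by positivity)] at hone
  rw [← Real.pow_rpow_inv_natCast hρ.le hp]
  gcongr

end MatrixNorm

end Sufficiency

section OrbitMeasure

variable {α : Type*} [MeasurableSpace α]

/-- The uniform probability measure on `x, f x, …, f^[n - 1] x`, counted with multiplicity: the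
invariant measure carried by the orbit of `x` when `f^[n] x = x`. -/
def orbitMeasure (f : α → α) (x : α) (n : ℕ) : Measure α :=
  (n : ℝ≥0∞)⁻¹ • ∑ t ∈ Finset.range n, Measure.dirac (f^[t] x)

variable {f : α → α} {x : α} {n : ℕ}

lemma isProbabilityMeasure_orbitMeasure (hn : n ≠ 0) :
    IsProbabilityMeasure (orbitMeasure f x n) :=
  ⟨by
    simp [orbitMeasure, ENNReal.inv_mul_cancel (Nat.cast_ne_zero.2 hn) (ENNReal.natCast_ne_top n)]⟩

lemma orbitMeasure_pos (hn : n ≠ 0) {U : Set α} (hx : x ∈ U) : 0 < orbitMeasure f x n U := by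
  rw [orbitMeasure, Measure.smul_apply, smul_eq_mul, Measure.finsetSum_apply]
  refine ENNReal.mul_pos (ENNReal.inv_ne_zero.2 (ENNReal.natCast_ne_top n)) (ne_of_gt ?_)
  calc 0 < Measure.dirac (f^[0] x) U := by
        rw [Function.iterate_zero_apply, Measure.dirac_apply_of_mem hx]
        exact one_pos
    _ ≤ ∑ t ∈ Finset.range n, Measure.dirac (f^[t] x) U :=
      Finset.single_le_sum (f := fun t => Measure.dirac (f^[t] x) U) (fun _ _ => zero_le)
        (Finset.mem_range.2 (Nat.pos_of_ne_zero hn))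

lemma ae_orbitMeasure [MeasurableSingletonClass α] {P : α → Prop} (h : ∀ t < n, P (f^[t] x)) :
    ∀ᵐ y ∂orbitMeasure f x n, P y := by
  refine Measure.ae_smul_measure (ae_finsetSum_measure_iff.2 fun t ht => ?_) _
  rw [ae_dirac_eq]
  exact h t (Finset.mem_range.1 ht)

lemma measurePreserving_orbitMeasure (hf : Measurable f) (hx : Function.IsPeriodicPt f n x) :
    MeasurePreserving f (orbitMeasure f x n) (orbitMeasure f x n) := by
  refine ⟨hf, ?_⟩
  have hshift : ∑ t ∈ Finset.range n, Measure.dirac (f^[t + 1] x) =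
      ∑ t ∈ Finset.range n, Measure.dirac (f^[t] x) := by
    cases n with
    | zero => rw [Finset.sum_range_zero, Finset.sum_range_zero]
    | succ m =>
      rw [Finset.sum_range_succ, hx.eq, Finset.sum_range_succ', Function.iterate_zero_apply]
  rw [orbitMeasure, Measure.map_smul, Measure.map_finset_sum hf.aemeasurable]
  simp only [Measure.map_dirac' hf, ← Function.iterate_succ_apply' f, hshift]

lemma ergodic_orbitMeasure [MeasurableSingletonClass α] (hf : Measurable f)
    (hx : Function.IsPeriodicPt f n x) : Ergodic f (orbitMeasure f x n) where
  toMeasurePreserving := measurePreserving_orbitMeasure hf hx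
  aeconst_set s _ hs := by
    have horbit : ∀ t, f^[t] x ∈ s ↔ x ∈ s := fun t => by
      rw [← Set.mem_preimage, Set.preimage_iterate_eq, Function.iterate_fixed hs]
    rw [eventuallyConst_set]
    by_cases hxs : x ∈ s
    · exact Or.inl (ae_orbitMeasure fun t _ => (horbit t).2 hxs)
    · exact Or.inr (ae_orbitMeasure fun t _ => (horbit t).not.2 hxs)

end OrbitMeasure

section PeriodicGrowth

lemma tendsto_natCast_div_div_natCast (p : ℕ) :
    Tendsto (fun n : ℕ => ((n / p : ℕ) : ℝ) / n) atTop (𝓝 (p : ℝ)⁻¹) := by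
  refine ((tendsto_nat_floor_mul_div_atTop (R := ℝ) (by positivity)).comp
    tendsto_natCast_atTop_atTop).congr fun n => ?_
  rw [Function.comp_apply, inv_mul_eq_div, Nat.floor_div_eq_div]

lemma tendsto_mul_const_rpow_inv {a : ℕ → ℝ} {r C : ℝ} (ha : ∀ n, 0 ≤ a n) (hC : 0 < C)
    (h : Tendsto (fun n : ℕ => a n ^ (n : ℝ)⁻¹) atTop (𝓝 r)) :
    Tendsto (fun n : ℕ => (a n * C) ^ (n : ℝ)⁻¹) atTop (𝓝 r) := by
  have hroot : Tendsto (fun n : ℕ => C ^ (n : ℝ)⁻¹) atTop (𝓝 1) := by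
    rw [← Real.rpow_zero C]
    exact (Real.continuousAt_const_rpow hC.ne').tendsto.comp tendsto_inv_atTop_nhds_zero_nat
  simpa only [Real.mul_rpow (ha _) hC.le, mul_one] using h.mul hroot

variable {K p : ℕ} {x : ℕ → Fin K}

lemma exists_forall_le_norm_cocycle_le {R : Type*} [NormedRing R] (T : Fin K → R) (p : ℕ) :
    ∃ C, 0 < C ∧ ∀ m ≤ p, ∀ i, ‖cocycle T i m‖ ≤ C := by
  choose c hc using exists_norm_cocycle_le T
  obtain ⟨C, hC⟩ := ((Set.finite_Iic p).image c).bddAbove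
  exact ⟨max C 1, by positivity, fun m hm i =>
    (hc m i).trans ((hC (Set.mem_image_of_mem c hm)).trans (le_max_left _ _))⟩

variable {R : Type*} [NormedRing R] [NormedAlgebra ℂ R]

lemma spectralRadius_cocycle_shift_iterate (T : Fin K → R)
    (hx : Function.IsPeriodicPt (shift K) p x) {t : ℕ} (ht : t ≤ p) :
    spectralRadius ℂ (cocycle T ((shift K)^[t] x) p) = spectralRadius ℂ (cocycle T x p) := by
  obtain ⟨s, rfl⟩ := Nat.exists_eq_add_of_le' ht
  have hreturn : (shift K)^[s] ((shift K)^[t] x) = x := by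
    rw [← Function.iterate_add_apply, hx.eq]
  rw [cocycle_add, hreturn, spectralRadius_mul_comm, ← cocycle_add, add_comm]

lemma tendsto_norm_cocycle_rpow_inv_of_isPeriodicPt [CompleteSpace R] (T : Fin K → R) (hp : 0 < p)
    (hx : Function.IsPeriodicPt (shift K) p x) :
    Tendsto (fun n : ℕ => ‖cocycle T x n‖ ^ (n : ℝ)⁻¹) atTop
      (𝓝 ((spectralRadius ℂ (cocycle T x p)).toReal ^ (p : ℝ)⁻¹)) := by
  set Q := cocycle T x p
  obtain ⟨C, hC, hC_le⟩ := exists_forall_le_norm_cocycle_le T p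
  have hdiv : Tendsto (fun n => n / p) atTop atTop := Nat.tendsto_div_const_atTop hp.ne'
  have hratio := tendsto_natCast_div_div_natCast p
  have hratio_succ : Tendsto (fun n : ℕ => ((n / p + 1 : ℕ) : ℝ) / n) atTop (𝓝 (p : ℝ)⁻¹) := by
    simpa [add_div] using hratio.add (tendsto_inv_atTop_nhds_zero_nat (𝕜 := ℝ))
  have hlimit {g : ℕ → ℕ} (hg : Tendsto g atTop atTop)
      (hgp : Tendsto (fun n => (g n : ℝ) / n) atTop (𝓝 (p : ℝ)⁻¹)) {c : ℝ} (hc : 0 < c) :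
      Tendsto (fun n : ℕ => (‖Q ^ g n‖ * c) ^ (n : ℝ)⁻¹) atTop
        (𝓝 ((spectralRadius ℂ Q).toReal ^ (p : ℝ)⁻¹)) :=
    tendsto_mul_const_rpow_inv (fun _ => norm_nonneg _) hc <|
      tendsto_rpow_inv_comp (fun _ => norm_nonneg _) (tendsto_norm_pow_rpow_inv Q) hg hgp
        (by positivity)
  refine tendsto_of_tendsto_of_tendsto_of_le_of_le
    (hlimit (tendsto_atTop_mono (fun n => Nat.le_succ _) hdiv) hratio_succ (inv_pos.2 hC))
    (hlimit hdiv hratio hC) (fun n => ?_) (fun n => ?_)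
  · refine Real.rpow_le_rpow (by positivity) ?_ (by positivity)
    have hlen : p * (n / p + 1) = n + (p - n % p) := by
      have := Nat.div_add_mod n p
      have := Nat.mod_lt n hp
      rw [mul_add_one]
      omega
    rw [mul_inv_le_iff₀ hC, ← cocycle_mul_of_isPeriodicPt T hx, hlen, cocycle_add]
    exact (norm_mul_le _ _).trans
      (mul_le_mul_of_nonneg_left (hC_le _ (Nat.sub_le _ _) _) (norm_nonneg _))
  · refine Real.rpow_le_rpow (norm_nonneg _) ?_ (by positivity)
    conv_lhs => rw [← Nat.div_add_mod n p, cocycle_add, cocycle_mul_of_isPeriodicPt T hx]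
    exact (norm_mul_le _ _).trans
      (mul_le_mul_of_nonneg_left (hC_le _ (Nat.mod_lt n hp).le _) (norm_nonneg _))

end PeriodicGrowth

lemma MatrixNorm.isExtremal_orbitMeasure {d K : ℕ} (ν : MatrixNorm d)
    {S : Fin K → Matrix (Fin d) (Fin d) ℂ} {ξ : ℕ → Fin K} {p : ℕ} (hξ : IsPeriodic ξ p)
    (hopt : genSpecRad S = specRad (wordProd S ξ p) ^ (p : ℝ)⁻¹) :
    IsExtremal S ν.N (orbitMeasure (shift K) ξ p) := by
  let _ := ν.normedRing
  let _ := ν.normedAlgebra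
  have : CompleteSpace (Matrix (Fin d) (Fin d) ℂ) := FiniteDimensional.complete ℂ _
  have hper : Function.IsPeriodicPt (shift K) p ξ := isPeriodicPt_shift_iff.2 hξ.2
  refine ae_orbitMeasure fun t ht => ?_
  have hlim := tendsto_norm_cocycle_rpow_inv_of_isPeriodicPt S hξ.1 (hper.apply_iterate t)
  rw [spectralRadius_cocycle_shift_iterate S hper ht.le] at hlim
  rw [hopt]
  exact hlim

theorem HasFinitenessProperty.exists_ergodic_isExtremal {d K : ℕ}
    {S : Fin K → Matrix (Fin d) (Fin d) ℂ} (hS : HasFinitenessProperty S) (ν : MatrixNorm d) :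
    ∃ μ : Measure (ℕ → Fin K), IsProbabilityMeasure μ ∧ Ergodic (shift K) μ ∧
      IsExtremal S ν.N μ ∧
      ∃ ξ : ℕ → Fin K, (∃ π : ℕ, IsPeriodic ξ π) ∧ DensityPoint μ ξ := by
  obtain ⟨n, hn, w, hw⟩ := hS
  obtain ⟨ξ, hξ, rfl⟩ := exists_isPeriodic_extension hn w
  have hn0 : n ≠ 0 := Nat.one_le_iff_ne_zero.1 hn
  exact ⟨orbitMeasure (shift K) ξ n, isProbabilityMeasure_orbitMeasure hn0,
    ergodic_orbitMeasure continuous_shift.measurable (isPeriodicPt_shift_iff.2 hξ.2),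
    ν.isExtremal_orbitMeasure hξ hw, ξ, ⟨n, hξ⟩, fun U _ hU => orbitMeasure_pos hn0 hU⟩

theorem finiteness_iff_extremal_measure_with_periodic_density_point_general
    {d K : ℕ} (S : Fin K → Matrix (Fin d) (Fin d) ℂ) (ν : MatrixNorm d) :
    List.TFAE [
      HasFinitenessProperty S,
      ∃ μ : Measure (ℕ → Fin K), IsProbabilityMeasure μ ∧ Ergodic (shift K) μ ∧
        IsExtremal S ν.N μ ∧
        ∃ ξ : ℕ → Fin K, (∃ π : ℕ, IsPeriodic ξ π) ∧ DensityPoint μ ξ,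
      ∃ μ : Measure (ℕ → Fin K), IsProbabilityMeasure μ ∧ MeasurePreserving (shift K) μ μ ∧
        IsExtremal S ν.N μ ∧
        ∃ ξ : ℕ → Fin K, (∃ π : ℕ, IsPeriodic ξ π) ∧ DensityPoint μ ξ] := by
  tfae_have 1 → 2 := fun hS => hS.exists_ergodic_isExtremal ν
  tfae_have 2 → 3 := fun ⟨μ, hprob, herg, h⟩ => ⟨μ, hprob, herg.toMeasurePreserving, h⟩
  tfae_have 3 → 1 := fun ⟨_, _, hμ, hext, _, ⟨_, hξ⟩, hdens⟩ =>
    ν.hasFinitenessProperty_of_densityPoint hμ hext hξ hdens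
  tfae_finish

/-- **Main Theorem.** `S` has the spectral finiteness property if and only if some
extremal ergodic probability measure for `S` has a periodic density point. -/
theorem finiteness_iff_extremal_measure_with_periodic_density_point
    {d K : ℕ} (hd : 2 ≤ d) (hK : 2 ≤ K)
    (S : Fin K → Matrix (Fin d) (Fin d) ℂ) (ν : MatrixNorm d) :
    HasFinitenessProperty S ↔
      ∃ μ : Measure (ℕ → Fin K), IsProbabilityMeasure μ ∧ Ergodic (shift K) μ ∧
        IsExtremal S ν.N μ ∧
        ∃ ξ : ℕ → Fin K, (∃ π : ℕ, IsPeriodic ξ π) ∧ DensityPoint μ ξ :=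
  (finiteness_iff_extremal_measure_with_periodic_density_point_general S ν).out 0 1
end
end

section
/- For any finite set S = {S_1,…,S_K} of complex d×d matrices there exists a linear subspace E of ℂ^d that is invariant under every S_k (S_k(E) ⊆ E for all 1 ≤ k ≤ K) and a norm |·| on E such that ρ̂(S) = ρ̂(S↾E) = max_{1 ≤ k ≤ K} |S_k↾E|, where S_k↾E denotes the restriction of S_k to E, S↾E = {S_1↾E,…,S_K↾E}, and |S_k↾E| is the operator norm of S_k↾E induced by the norm |·| on E. -/
open Filter MeasureTheory Topology
open scoped ENNReal

noncomputable section

/-- The operator "norm" of the matrix `A` acting on the subset `E`, induced by the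
(partial) vector norm `Nv`. -/
def relOpNorm {d : ℕ} (E : Set (Fin d → ℂ)) (Nv : (Fin d → ℂ) → ℝ)
    (A : Matrix (Fin d) (Fin d) ℂ) : ℝ :=
  sInf {c : ℝ | 0 ≤ c ∧ ∀ x ∈ E, Nv (A.mulVec x) ≤ c * Nv x}

/-- The joint spectral radius of the family `S`, restricted to `E` and computed with the
operator norm induced by `Nv` on `E`. -/
def jointSpecRadOn {d K : ℕ} (E : Set (Fin d → ℂ)) (Nv : (Fin d → ℂ) → ℝ)
    (S : Fin K → Matrix (Fin d) (Fin d) ℂ) : ℝ :=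
  Filter.atTop.limsup fun n : ℕ =>
    ⨆ w : Fin n → Fin K, relOpNorm E Nv (finWordProd S w) ^ ((n : ℝ)⁻¹)

/-- The joint spectral radius of the family `S`, computed with the operator norm
induced by the sup-norm on `ℂ^d`. -/
def jointSpecRad {d K : ℕ} (S : Fin K → Matrix (Fin d) (Fin d) ℂ) : ℝ :=
  jointSpecRadOn Set.univ (fun x => ‖x‖) S

/-! Let `ρ > 0` be the joint spectral radius and let `E` consist of the vectors `x` for which
`‖T_w x‖ / ρ ^ |w|` stays bounded over all words `w`; the supremum of these quotients is a norm on
`E` for which every `T k` has norm at most `ρ`. If the restriction to `E` had radius `< ρ`, the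
factor `E` could be split off: an orbit that is bounded modulo `E` would be bounded, so in the
quotient by `E` only `0` has a bounded orbit. By compactness the quotient operators then expand
every vector exponentially faster than `ρ ^ n`, which is impossible unless `E` is the whole space,
and in that case the radius on `E` is `ρ` after all. -/

section OpNormOn

variable {V : Type*} {E : Set V} {N : V → ℝ} {f : V → V} {c : ℝ}

/-- The operator norm of the restriction of `f` to `E`, where vectors are measured by `N`. As for
`relOpNorm`, it has the junk value `0` when the restriction is unbounded. -/
def opNormOn (E : Set V) (N : V → ℝ) (f : V → V) : ℝ :=
  sInf {c : ℝ | 0 ≤ c ∧ ∀ x ∈ E, N (f x) ≤ c * N x}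

theorem opNormOn_nonneg (E : Set V) (N : V → ℝ) (f : V → V) : 0 ≤ opNormOn E N f :=
  Real.sInf_nonneg fun _ hc => hc.1

theorem opNormOn_le (hc : 0 ≤ c) (h : ∀ x ∈ E, N (f x) ≤ c * N x) : opNormOn E N f ≤ c :=
  csInf_le ⟨0, fun _ hc => hc.1⟩ ⟨hc, h⟩

theorem le_opNormOn_mul (hc : 0 ≤ c) (h : ∀ x ∈ E, N (f x) ≤ c * N x) {x : V} (hx : x ∈ E) :
    N (f x) ≤ opNormOn E N f * N x := by
  have hclosed : IsClosed {c : ℝ | 0 ≤ c ∧ ∀ x ∈ E, N (f x) ≤ c * N x} := by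
    simp only [Set.ofPred_and, Set.ofPred_forall]
    exact isClosed_Ici.inter <| isClosed_iInter fun x => isClosed_iInter fun _ =>
      isClosed_le continuous_const (by fun_prop)
  exact (hclosed.csInf_mem ⟨c, hc, h⟩ ⟨0, fun _ hc => hc.1⟩).2 x hx

end OpNormOn

section JointSpectralRadius

variable {𝕜 V ι : Type*} [NontriviallyNormedField 𝕜] [NormedAddCommGroup V] [NormedSpace 𝕜 V]
  {E : Set V} {N : V → ℝ} {T : ι → V →L[𝕜] V} {C r : ℝ}

/-- The joint spectral radius of the restrictions to `E` of a family of operators, computed with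
the operator norms induced by `N`: the version of `jointSpecRadOn` for operators. -/
def jointSpectralRadiusOn (E : Set V) (N : V → ℝ) (T : ι → V →L[𝕜] V) : ℝ :=
  limsup (fun n : ℕ => ⨆ w : Fin n → ι, opNormOn E N ((List.ofFn w).map T).prod ^ (n : ℝ)⁻¹) atTop

/-- The words of length `n` in the operators `T k` expand the vectors of `E`, measured by `N`, by
at most a constant times `r ^ n`. -/
def HasWordGrowth (E : Set V) (N : V → ℝ) (T : ι → V →L[𝕜] V) (r : ℝ) : Prop :=
  ∃ C > 0, ∀ l : List ι, ∀ x ∈ E, N ((l.map T).prod x) ≤ C * r ^ l.length * N x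

theorem opNormOn_word_rpow_le (hC : 0 ≤ C) (hr : 0 ≤ r) {n : ℕ} (hn : n ≠ 0)
    (h : ∀ l : List ι, l.length = n → ∀ x ∈ E, N ((l.map T).prod x) ≤ C * r ^ n * N x)
    (w : Fin n → ι) :
    opNormOn E N ((List.ofFn w).map T).prod ^ (n : ℝ)⁻¹ ≤ C ^ (n : ℝ)⁻¹ * r := by
  have hle : opNormOn E N ((List.ofFn w).map T).prod ≤ C * r ^ n :=
    opNormOn_le (by positivity) (h _ (by simp))
  calc opNormOn E N ((List.ofFn w).map T).prod ^ (n : ℝ)⁻¹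
      ≤ (C * r ^ n) ^ (n : ℝ)⁻¹ := Real.rpow_le_rpow (opNormOn_nonneg _ _ _) hle (by positivity)
    _ = C ^ (n : ℝ)⁻¹ * r := by
      rw [Real.mul_rpow hC (by positivity), Real.pow_rpow_inv_natCast hr hn]

theorem iSup_opNormOn_word_rpow_nonneg (E : Set V) (N : V → ℝ) (T : ι → V →L[𝕜] V) (n : ℕ) :
    0 ≤ ⨆ w : Fin n → ι, opNormOn E N ((List.ofFn w).map T).prod ^ (n : ℝ)⁻¹ :=
  Real.iSup_nonneg fun _ => Real.rpow_nonneg (opNormOn_nonneg _ _ _) _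

theorem jointSpectralRadiusOn_nonneg (E : Set V) (N : V → ℝ) (T : ι → V →L[𝕜] V) :
    0 ≤ jointSpectralRadiusOn E N T := by
  rw [jointSpectralRadiusOn, limsup_eq]
  refine Real.sInf_nonneg fun a ha => ?_
  obtain ⟨n, hn⟩ := Eventually.exists ha
  exact (iSup_opNormOn_word_rpow_nonneg E N T n).trans hn

theorem tendsto_rpow_inv_natCast_mul (hC : 0 < C) (r : ℝ) :
    Tendsto (fun n : ℕ => C ^ (n : ℝ)⁻¹ * r) atTop (𝓝 r) := by
  have hroot := tendsto_const_nhds.rpow (tendsto_inv_atTop_nhds_zero_nat (𝕜 := ℝ)) (.inl hC.ne')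
  simpa using hroot.mul_const r

theorem list_prod_apply_mem (hE : ∀ k, ∀ x ∈ E, T k x ∈ E) (l : List ι) {x : V} (hx : x ∈ E) :
    (l.map T).prod x ∈ E := by
  induction l with
  | nil => simpa using hx
  | cons k l ih => simpa using hE k _ ih

namespace HasWordGrowth

theorem eventually_iSup_le (hr : 0 ≤ r) (h : HasWordGrowth E N T r) :
    ∃ C > 0, ∀ᶠ n : ℕ in atTop,
      (⨆ w : Fin n → ι, opNormOn E N ((List.ofFn w).map T).prod ^ (n : ℝ)⁻¹)
        ≤ C ^ (n : ℝ)⁻¹ * r := by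
  obtain ⟨C, hC, h⟩ := h
  refine ⟨C, hC, (eventually_ne_atTop 0).mono fun n hn => ?_⟩
  exact Real.iSup_le (opNormOn_word_rpow_le hC.le hr hn fun l hl => hl ▸ h l) (by positivity)

theorem jointSpectralRadiusOn_le (hr : 0 ≤ r) (h : HasWordGrowth E N T r) :
    jointSpectralRadiusOn E N T ≤ r := by
  obtain ⟨C, hC, hle⟩ := h.eventually_iSup_le hr
  have hlim := tendsto_rpow_inv_natCast_mul hC r
  refine (limsup_le_limsup hle ?_ hlim.isBoundedUnder_le).trans_eq hlim.limsup_eq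
  exact isCoboundedUnder_le_of_le _ (iSup_opNormOn_word_rpow_nonneg E N T)

theorem isBoundedUnder (hr : 0 ≤ r) (h : HasWordGrowth E N T r) :
    IsBoundedUnder (· ≤ ·) atTop fun n : ℕ =>
      ⨆ w : Fin n → ι, opNormOn E N ((List.ofFn w).map T).prod ^ (n : ℝ)⁻¹ := by
  obtain ⟨C, hC, hle⟩ := h.eventually_iSup_le hr
  exact (tendsto_rpow_inv_natCast_mul hC r).isBoundedUnder_le.mono_le hle

theorem eventually_le_pow_mul {M : ℝ} (hN : ∀ x ∈ E, 0 ≤ N x) (hM : 0 ≤ M)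
    (h : HasWordGrowth E N T M) (hr : jointSpectralRadiusOn E N T < r) :
    ∀ᶠ n : ℕ in atTop, ∀ l : List ι, l.length = n → ∀ x ∈ E,
      N ((l.map T).prod x) ≤ r ^ n * N x := by
  filter_upwards [eventually_lt_of_limsup_lt hr (h.isBoundedUnder hM), eventually_ne_atTop 0]
    with n hn hn0
  obtain ⟨C, hC, h⟩ := h
  rintro l rfl x hx
  have hroot : opNormOn E N (l.map T).prod ^ (l.length : ℝ)⁻¹ ≤ r := by
    refine le_trans ?_ hn.le
    have hbdd : BddAbove (Set.range fun w : Fin l.length → ι =>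
        opNormOn E N ((List.ofFn w).map T).prod ^ (l.length : ℝ)⁻¹) :=
      ⟨_, Set.forall_mem_range.2 <|
        opNormOn_word_rpow_le hC.le hM hn0 fun l' hl' => hl' ▸ h l'⟩
    simpa only [List.ofFn_get] using le_ciSup hbdd l.get
  have hnorm : opNormOn E N (l.map T).prod ≤ r ^ l.length := by
    rw [← Real.rpow_inv_natCast_pow (opNormOn_nonneg E N (l.map T).prod) hn0]
    exact pow_le_pow_left₀ (Real.rpow_nonneg (opNormOn_nonneg _ _ _) _) hroot _
  exact (le_opNormOn_mul (by positivity) (h l) hx).trans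
    (mul_le_mul_of_nonneg_right hnorm (hN x hx))

theorem of_jointSpectralRadiusOn_lt {M : ℝ} (hN : ∀ x ∈ E, 0 ≤ N x) (hM : 0 ≤ M)
    (h : HasWordGrowth E N T M) (hr : jointSpectralRadiusOn E N T < r) :
    HasWordGrowth E N T r := by
  have hr0 : 0 < r := (jointSpectralRadiusOn_nonneg E N T).trans_lt hr
  obtain ⟨n₀, hlong⟩ := eventually_atTop.1 (h.eventually_le_pow_mul hN hM hr)
  obtain ⟨C, hC, hshort⟩ := h
  set a := max 1 (M / r)
  have ha : 1 ≤ a := le_max_left _ _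
  have hMa : M ≤ a * r := (div_le_iff₀ hr0).1 (le_max_right _ _)
  refine ⟨1 + C * a ^ n₀, by positivity, fun l x hx => ?_⟩
  have hNx := hN x hx
  rcases le_total n₀ l.length with hl | hl
  · calc N ((l.map T).prod x) ≤ 1 * r ^ l.length * N x := by simpa using hlong _ hl l rfl x hx
      _ ≤ (1 + C * a ^ n₀) * r ^ l.length * N x := by
        gcongr
        exact le_add_of_nonneg_right (by positivity)
  · calc N ((l.map T).prod x) ≤ C * M ^ l.length * N x := hshort l x hx
      _ ≤ C * (a * r) ^ l.length * N x := by gcongr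
      _ = C * a ^ l.length * r ^ l.length * N x := by ring
      _ ≤ (1 + C * a ^ n₀) * r ^ l.length * N x := by
        gcongr
        exact (mul_le_mul_of_nonneg_left (pow_le_pow_right₀ ha hl) hC.le).trans
          (le_add_of_nonneg_left zero_le_one)

theorem of_apply_le {M : ℝ} (hM : 0 ≤ M) (hE : ∀ k, ∀ x ∈ E, T k x ∈ E)
    (hT : ∀ k, ∀ x ∈ E, N (T k x) ≤ M * N x) : HasWordGrowth E N T M := by
  refine ⟨1, one_pos, fun l x hx => ?_⟩
  rw [one_mul]
  induction l with
  | nil => simp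
  | cons k l ih =>
    rw [List.map_cons, List.prod_cons, mul_apply_eq_comp, List.length_cons, pow_succ', mul_assoc]
    exact (hT k _ (list_prod_apply_mem hE l hx)).trans (mul_le_mul_of_nonneg_left ih hM)

theorem of_equivalent {N' : V → ℝ} {a b : ℝ} (hr : 0 ≤ r) (ha : 0 < a) (hb : 0 < b)
    (hE : ∀ k, ∀ x ∈ E, T k x ∈ E) (hN : ∀ x ∈ E, N x ≤ a * N' x)
    (hN' : ∀ x ∈ E, N' x ≤ b * N x) (h : HasWordGrowth E N T r) : HasWordGrowth E N' T r := by
  obtain ⟨C, hC, h⟩ := h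
  refine ⟨b * C * a, by positivity, fun l x hx => ?_⟩
  calc N' ((l.map T).prod x) ≤ b * N ((l.map T).prod x) := hN' _ (list_prod_apply_mem hE l hx)
    _ ≤ b * (C * r ^ l.length * (a * N' x)) := by
      gcongr
      exact (h l x hx).trans (by gcongr; exact hN x hx)
    _ = b * C * a * r ^ l.length * N' x := by ring

end HasWordGrowth

theorem jointSpectralRadiusOn_le_iSup_opNormOn {M : ℝ} (hM : 0 ≤ M) (hN : ∀ x ∈ E, 0 ≤ N x)
    (hE : ∀ k, ∀ x ∈ E, T k x ∈ E) (hT : ∀ k, ∀ x ∈ E, N (T k x) ≤ M * N x) :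
    jointSpectralRadiusOn E N T ≤ ⨆ k, opNormOn E N (T k) := by
  have hsup : 0 ≤ ⨆ k, opNormOn E N (T k) := Real.iSup_nonneg fun k => opNormOn_nonneg _ _ _
  have hbdd : BddAbove (Set.range fun k => opNormOn E N (T k)) :=
    ⟨M, Set.forall_mem_range.2 fun k => opNormOn_le hM (hT k)⟩
  refine (HasWordGrowth.of_apply_le hsup hE fun k x hx => ?_).jointSpectralRadiusOn_le hsup
  exact (le_opNormOn_mul hM (hT k) hx).trans
    (mul_le_mul_of_nonneg_right (le_ciSup hbdd k) (hN x hx))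

end JointSpectralRadius

section BoundedOrbits

variable {𝕜 V ι : Type*} [NontriviallyNormedField 𝕜] [NormedAddCommGroup V] [NormedSpace 𝕜 V]
  {T : ι → V →L[𝕜] V} {ρ : ℝ} {x y : V}

/-- The vectors whose orbit under the words in the operators `T k` grows at most like `ρ ^ n`,
where `n` is the length of the word. -/
def boundedOrbits (T : ι → V →L[𝕜] V) (ρ : ℝ) : Submodule 𝕜 V where
  carrier := {x | ∃ C : ℝ, ∀ l : List ι, ‖(l.map T).prod x‖ ≤ C * ρ ^ l.length}
  add_mem' := by
    rintro x y ⟨C, hC⟩ ⟨D, hD⟩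
    refine ⟨C + D, fun l => ?_⟩
    rw [map_add, add_mul]
    exact norm_add_le_of_le (hC l) (hD l)
  zero_mem' := ⟨0, fun l => by simp⟩
  smul_mem' := by
    rintro c x ⟨C, hC⟩
    refine ⟨‖c‖ * C, fun l => ?_⟩
    rw [map_smul, norm_smul, mul_assoc]
    exact mul_le_mul_of_nonneg_left (hC l) (norm_nonneg c)

theorem apply_mem_boundedOrbits (k : ι) (hx : x ∈ boundedOrbits T ρ) :
    T k x ∈ boundedOrbits T ρ := by
  obtain ⟨C, hC⟩ := hx
  refine ⟨C * ρ, fun l => ?_⟩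
  simpa [pow_succ', mul_assoc] using hC (l ++ [k])

/-- The extremal norm on `boundedOrbits T ρ`: the supremum of `‖T_w x‖ / ρ ^ |w|` over all words
`w`. Outside `boundedOrbits T ρ` it has the junk value `0`. -/
def orbitNorm (T : ι → V →L[𝕜] V) (ρ : ℝ) (x : V) : ℝ :=
  ⨆ l : List ι, ‖(l.map T).prod x‖ / ρ ^ l.length

theorem bddAbove_range_norm_div_pow (hρ : 0 < ρ) (hx : x ∈ boundedOrbits T ρ) :
    BddAbove (Set.range fun l : List ι => ‖(l.map T).prod x‖ / ρ ^ l.length) := by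
  obtain ⟨C, hC⟩ := hx
  exact ⟨C, Set.forall_mem_range.2 fun l => (div_le_iff₀ (by positivity)).2 (hC l)⟩

theorem norm_div_pow_le_orbitNorm (hρ : 0 < ρ) (hx : x ∈ boundedOrbits T ρ) (l : List ι) :
    ‖(l.map T).prod x‖ / ρ ^ l.length ≤ orbitNorm T ρ x :=
  le_ciSup (bddAbove_range_norm_div_pow hρ hx) l

theorem norm_le_orbitNorm (hρ : 0 < ρ) (hx : x ∈ boundedOrbits T ρ) : ‖x‖ ≤ orbitNorm T ρ x := by
  simpa using norm_div_pow_le_orbitNorm hρ hx []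

theorem orbitNorm_nonneg (hρ : 0 ≤ ρ) (x : V) : 0 ≤ orbitNorm T ρ x :=
  Real.iSup_nonneg fun _ => by positivity

theorem orbitNorm_smul (c : 𝕜) (x : V) : orbitNorm T ρ (c • x) = ‖c‖ * orbitNorm T ρ x := by
  simp only [orbitNorm, map_smul, norm_smul, mul_div_assoc,
    Real.mul_iSup_of_nonneg (norm_nonneg c)]

theorem orbitNorm_add_le (hρ : 0 < ρ) (hx : x ∈ boundedOrbits T ρ) (hy : y ∈ boundedOrbits T ρ) :
    orbitNorm T ρ (x + y) ≤ orbitNorm T ρ x + orbitNorm T ρ y := by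
  refine ciSup_le fun l => ?_
  calc ‖(l.map T).prod (x + y)‖ / ρ ^ l.length
      ≤ ‖(l.map T).prod x‖ / ρ ^ l.length + ‖(l.map T).prod y‖ / ρ ^ l.length := by
        rw [map_add, ← add_div]
        gcongr
        exact norm_add_le _ _
    _ ≤ _ := add_le_add (norm_div_pow_le_orbitNorm hρ hx l) (norm_div_pow_le_orbitNorm hρ hy l)

theorem orbitNorm_eq_zero_iff (hρ : 0 < ρ) (hx : x ∈ boundedOrbits T ρ) :
    orbitNorm T ρ x = 0 ↔ x = 0 := by
  refine ⟨fun h => norm_le_zero_iff.1 (h ▸ norm_le_orbitNorm hρ hx), ?_⟩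
  rintro rfl
  simp [orbitNorm]

theorem orbitNorm_apply_le (hρ : 0 < ρ) (hx : x ∈ boundedOrbits T ρ) (k : ι) :
    orbitNorm T ρ (T k x) ≤ ρ * orbitNorm T ρ x := by
  refine ciSup_le fun l => ?_
  have h := norm_div_pow_le_orbitNorm hρ hx (l ++ [k])
  rw [div_le_iff₀ (by positivity)] at h ⊢
  simpa [pow_succ', mul_assoc, mul_left_comm] using h

theorem exists_orbitNorm_le [CompleteSpace (boundedOrbits T ρ)] (hρ : 0 < ρ) :
    ∃ C > 0, ∀ x ∈ boundedOrbits T ρ, orbitNorm T ρ x ≤ C * ‖x‖ := by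
  let p : Seminorm 𝕜 (boundedOrbits T ρ) := .of (fun x => orbitNorm T ρ x)
    (fun x y => orbitNorm_add_le hρ x.2 y.2) fun c x => orbitNorm_smul c (x : V)
  -- A lower semicontinuous seminorm on a Banach space is continuous.
  have hp : Continuous p := p.continuous_of_lowerSemicontinuous <|
    lowerSemicontinuous_ciSup (fun x => bddAbove_range_norm_div_pow hρ x.2) fun l =>
      Continuous.lowerSemicontinuous (by fun_prop)
  obtain ⟨C, hC, hle⟩ := p.bound_of_continuous_normedSpace hp
  exact ⟨C, hC, fun x hx => hle ⟨x, hx⟩⟩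

end BoundedOrbits

section Splitting

variable {𝕜 V ι : Type*} [NontriviallyNormedField 𝕜] [NormedAddCommGroup V] [NormedSpace 𝕜 V]
  {T : ι → V →L[𝕜] V} {ρ r : ℝ} {x : V}

theorem mem_boundedOrbits_of_near (hρ : 0 < ρ) {n : ℕ} (hn : n ≠ 0) {A M : ℝ} (hA0 : 0 ≤ A)
    (hA : ∀ l : List ι, l.length ≤ n → ∀ v, ‖(l.map T).prod v‖ ≤ A * ρ ^ l.length * ‖v‖)
    {E : Set V} (hE : ∀ l : List ι, l.length = n → ∀ b ∈ E,
      ‖(l.map T).prod b‖ ≤ 1 / 2 * ρ ^ l.length * ‖b‖)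
    (hM : ∀ l : List ι, ∃ b ∈ E, ‖(l.map T).prod x - b‖ ≤ M * ρ ^ l.length) :
    x ∈ boundedOrbits T ρ := by
  have : 0 ≤ M := by
    obtain ⟨b, -, hb⟩ := hM []
    simpa using (norm_nonneg _).trans hb
  set D := max (A * ‖x‖) (M + 2 * (A * M))
  have hD : M + 2 * (A * M) ≤ D := le_max_right _ _
  -- Cut the words into blocks of length `n`: each block halves the component of the orbit in `E`,
  -- in units of `ρ ^ |w|`, and adds a bounded error.
  refine ⟨D, fun l => ?_⟩
  induction hl : l.length using Nat.strong_induction_on generalizing l with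
  | _ m ih =>
    subst hl
    rcases le_or_gt l.length n with hln | hln
    · calc ‖(l.map T).prod x‖ ≤ A * ‖x‖ * ρ ^ l.length := by
            simpa only [mul_right_comm] using hA l hln x
        _ ≤ D * ρ ^ l.length := by gcongr; exact le_max_left _ _
    obtain ⟨u, v, rfl, hu⟩ : ∃ u v : List ι, l = u ++ v ∧ u.length = n :=
      ⟨l.take n, l.drop n, (List.take_append_drop n l).symm, by simp [hln.le]⟩
    rw [List.length_append] at ih ⊢
    have hv := ih v.length (by lia) v rfl
    obtain ⟨b, hb, hdist⟩ := hM v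
    set y := (v.map T).prod x
    have hbnorm : ‖b‖ ≤ (D + M) * ρ ^ v.length := by
      linarith [norm_le_norm_add_norm_sub' b y, norm_sub_rev b y]
    have hsplit : ((u ++ v).map T).prod x = (u.map T).prod b + (u.map T).prod (y - b) := by
      rw [← map_add, add_sub_cancel, List.map_append, List.prod_append, mul_apply_eq_comp]
    calc ‖((u ++ v).map T).prod x‖
        ≤ 1 / 2 * ρ ^ u.length * ‖b‖ + A * ρ ^ u.length * ‖y - b‖ :=
          hsplit ▸ norm_add_le_of_le (hE u hu b hb) (hA u hu.le _)
      _ ≤ 1 / 2 * ρ ^ u.length * ((D + M) * ρ ^ v.length)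
          + A * ρ ^ u.length * (M * ρ ^ v.length) := by gcongr
      _ = ((D + (M + 2 * (A * M))) / 2) * ρ ^ (u.length + v.length) := by ring
      _ ≤ D * ρ ^ (u.length + v.length) := by gcongr; linarith

theorem exists_uniform_doubling [ProperSpace V] (hbot : boundedOrbits T ρ = ⊥) :
    ∃ m : ℕ, ∀ x, ∃ l : List ι, l.length ≤ m ∧
      2 * ρ ^ l.length * ‖x‖ ≤ ‖(l.map T).prod x‖ := by
  obtain ⟨c, hc⟩ := NormedField.exists_one_lt_norm 𝕜
  have hc0 : 0 < 1 / ‖c‖ := by positivity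
  have hcompact : IsCompact (Metric.closedBall (0 : V) 1 \ Metric.ball 0 (1 / ‖c‖)) :=
    (isCompact_closedBall 0 1).diff Metric.isOpen_ball
  have hescape : ∀ x ≠ 0, ∃ l : List ι, 2 * ρ ^ l.length * ‖x‖ < ‖(l.map T).prod x‖ := by
    intro x hx
    by_contra! h
    have hmem : x ∈ boundedOrbits T ρ := ⟨2 * ‖x‖, fun l => (h l).trans_eq (mul_right_comm _ _ _)⟩
    exact hx (by simpa [hbot] using hmem)
  obtain ⟨t, ht⟩ := hcompact.elim_finite_subcover
    (fun l : List ι => {x | 2 * ρ ^ l.length * ‖x‖ < ‖(l.map T).prod x‖})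
    (fun l => isOpen_lt (by fun_prop) (by fun_prop)) fun x hx => by
      refine Set.mem_iUnion.2 (hescape x ?_)
      rintro rfl
      exact hx.2 (Metric.mem_ball_self hc0)
  refine ⟨t.sup List.length, fun x => ?_⟩
  rcases eq_or_ne x 0 with rfl | hx
  · exact ⟨[], by simp⟩
  obtain ⟨d, -, hlt, hge, -⟩ := rescale_to_shell hc one_pos hx
  obtain ⟨l, hl, hdouble⟩ := Set.mem_iUnion₂.1 (ht ⟨by simpa using hlt.le, by simpa using hge⟩)
  refine ⟨l, Finset.le_sup hl, ?_⟩
  rw [Set.mem_ofPred_eq, map_smul, norm_smul, norm_smul, mul_left_comm] at hdouble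
  exact (lt_of_mul_lt_mul_left hdouble (norm_nonneg d)).le

theorem exists_two_pow_mul_le (hρ : 0 ≤ ρ) {m : ℕ} (hdouble : ∀ x, ∃ l : List ι, l.length ≤ m ∧
      2 * ρ ^ l.length * ‖x‖ ≤ ‖(l.map T).prod x‖) (x : V) (n : ℕ) :
    ∃ l : List ι, l.length ≤ n * m ∧ 2 ^ n * ρ ^ l.length * ‖x‖ ≤ ‖(l.map T).prod x‖ := by
  induction n with
  | zero => exact ⟨[], by simp⟩
  | succ n ih =>
    obtain ⟨v, hv, hvx⟩ := ih
    obtain ⟨u, hu, hux⟩ := hdouble ((v.map T).prod x)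
    refine ⟨u ++ v, by rw [List.length_append, add_mul]; lia, ?_⟩
    rw [List.map_append, List.prod_append, mul_apply_eq_comp, List.length_append]
    calc 2 ^ (n + 1) * ρ ^ (u.length + v.length) * ‖x‖
        = 2 * ρ ^ u.length * (2 ^ n * ρ ^ v.length * ‖x‖) := by ring
      _ ≤ 2 * ρ ^ u.length * ‖(v.map T).prod x‖ := by gcongr
      _ ≤ ‖(u.map T).prod ((v.map T).prod x)‖ := hux

theorem eq_zero_of_forall_growth [ProperSpace V] (hρ : 0 < ρ) (hbot : boundedOrbits T ρ = ⊥)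
    (hx : ∀ r > ρ, ∃ C, ∀ l : List ι, ‖(l.map T).prod x‖ ≤ C * r ^ l.length) : x = 0 := by
  obtain ⟨m, hdouble⟩ := exists_uniform_doubling hbot
  set s : ℝ := 2 ^ ((m + 1 : ℕ) : ℝ)⁻¹
  have hs1 : 1 < s := Real.one_lt_rpow one_lt_two (by positivity)
  have hsm : s ^ (m + 1) = 2 := Real.rpow_inv_natCast_pow zero_le_two m.succ_ne_zero
  obtain ⟨C, hC⟩ := hx (ρ * s) (lt_mul_of_one_lt_right hρ hs1)
  have hC0 : 0 ≤ C := by simpa using (norm_nonneg _).trans (hC [])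
  have hbound : ∀ n : ℕ, s ^ n * ‖x‖ ≤ C := by
    intro n
    obtain ⟨l, hl, hlx⟩ := exists_two_pow_mul_le hρ.le hdouble x n
    refine le_of_mul_le_mul_right ?_ (show 0 < s ^ (n * m) * ρ ^ l.length by positivity)
    calc s ^ n * ‖x‖ * (s ^ (n * m) * ρ ^ l.length) = 2 ^ n * ρ ^ l.length * ‖x‖ := by
          rw [← hsm]; ring
      _ ≤ C * (ρ * s) ^ l.length := hlx.trans (hC l)
      _ = C * (s ^ l.length * ρ ^ l.length) := by rw [mul_pow, mul_comm (ρ ^ _)]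
      _ ≤ C * (s ^ (n * m) * ρ ^ l.length) := by
        gcongr
        exact hs1.le
  by_contra hx0
  have hpos : 0 < ‖x‖ := norm_pos_iff.2 hx0
  obtain ⟨n, hn⟩ := pow_unbounded_of_one_lt (C / ‖x‖) hs1
  exact (hbound n).not_gt ((div_lt_iff₀ hpos).1 hn)

/-- The operators induced by the family `T` on the quotient by `boundedOrbits T ρ`. -/
def quotientFamily (T : ι → V →L[𝕜] V) (ρ : ℝ) (k : ι) :
    V ⧸ boundedOrbits T ρ →L[𝕜] V ⧸ boundedOrbits T ρ :=
  (boundedOrbits T ρ).liftQL ((boundedOrbits T ρ).mkQL.comp (T k)) fun x hx => by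
    simpa using apply_mem_boundedOrbits k hx

theorem mkQL_list_prod_apply (l : List ι) (x : V) :
    (boundedOrbits T ρ).mkQL ((l.map T).prod x)
      = (l.map (quotientFamily T ρ)).prod ((boundedOrbits T ρ).mkQL x) := by
  induction l with
  | nil => simp
  | cons k l ih =>
    rw [List.map_cons, List.prod_cons, mul_apply_eq_comp, List.map_cons, List.prod_cons,
      mul_apply_eq_comp, ← ih]
    rfl

theorem HasWordGrowth.exists_contraction {E : Set V} (hr : 0 ≤ r) (hrρ : r < ρ)
    (h : HasWordGrowth E norm T r) :
    ∃ n ≠ 0, ∀ l : List ι, l.length = n → ∀ b ∈ E,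
      ‖(l.map T).prod b‖ ≤ 1 / 2 * ρ ^ l.length * ‖b‖ := by
  obtain ⟨C, _, h⟩ := h
  have hρ : 0 < ρ := hr.trans_lt hrρ
  have hlim : Tendsto (fun n : ℕ => C * (r / ρ) ^ n) atTop (𝓝 0) := by
    simpa using (tendsto_pow_atTop_nhds_zero_of_lt_one (by positivity)
      ((div_lt_one hρ).2 hrρ)).const_mul C
  obtain ⟨n, hn, hn0⟩ :=
    ((hlim.eventually_le_const one_half_pos).and (eventually_ne_atTop 0)).exists
  refine ⟨n, hn0, fun l hl b hb => (h l b hb).trans ?_⟩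
  rw [div_pow, mul_div_assoc', div_le_iff₀ (by positivity), ← hl] at hn
  gcongr

theorem boundedOrbits_quotientFamily_eq_bot [IsClosed (boundedOrbits T ρ : Set V)] (hρ : 0 < ρ)
    {n : ℕ} (hn : n ≠ 0) {A : ℝ} (hA0 : 0 ≤ A)
    (hA : ∀ l : List ι, l.length ≤ n → ∀ v, ‖(l.map T).prod v‖ ≤ A * ρ ^ l.length * ‖v‖)
    (hE : ∀ l : List ι, l.length = n → ∀ b ∈ boundedOrbits T ρ,
      ‖(l.map T).prod b‖ ≤ 1 / 2 * ρ ^ l.length * ‖b‖) :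
    boundedOrbits (quotientFamily T ρ) ρ = ⊥ := by
  refine (Submodule.eq_bot_iff _).2 fun y hy => ?_
  obtain ⟨x, rfl⟩ := (boundedOrbits T ρ).mkQ_surjective y
  obtain ⟨M, hM⟩ := hy
  refine (Submodule.Quotient.mk_eq_zero _).2 <|
    mem_boundedOrbits_of_near (M := M + 1) hρ hn hA0 hA hE fun l => ?_
  obtain ⟨z, hz, hlt⟩ := Submodule.Quotient.norm_mk_lt
    ((boundedOrbits T ρ).mkQ ((l.map T).prod x)) (pow_pos hρ l.length)
  refine ⟨(l.map T).prod x - z, (Submodule.Quotient.eq _).1 hz.symm, ?_⟩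
  rw [sub_sub_cancel, add_mul, one_mul]
  refine hlt.le.trans (add_le_add_left ?_ _)
  exact (congrArg norm (mkQL_list_prod_apply l x)).trans_le (hM l)

theorem boundedOrbits_eq_top [LocallyCompactSpace 𝕜] [FiniteDimensional 𝕜 V] (hr : 0 ≤ r)
    (hrρ : r < ρ) (hgrowth : ∀ s > ρ, HasWordGrowth Set.univ norm T s)
    (hE : HasWordGrowth (boundedOrbits T ρ : Set V) norm T r) : boundedOrbits T ρ = ⊤ := by
  have hρ : 0 < ρ := hr.trans_lt hrρ
  obtain ⟨n, hn, hcontract⟩ := hE.exists_contraction hr hrρ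
  obtain ⟨C, _, hC⟩ := hgrowth (2 * ρ) (by linarith)
  have hshort : ∀ l : List ι, l.length ≤ n → ∀ v,
      ‖(l.map T).prod v‖ ≤ C * 2 ^ n * ρ ^ l.length * ‖v‖ := by
    intro l hl v
    refine (hC l v trivial).trans ?_
    rw [mul_pow, ← mul_assoc]
    gcongr
    exact one_le_two
  have : ProperSpace 𝕜 := .of_locallyCompactSpace 𝕜
  have hclosed : IsClosed (boundedOrbits T ρ : Set V) := Submodule.closed_of_finiteDimensional _
  have : ProperSpace (V ⧸ boundedOrbits T ρ) := FiniteDimensional.proper 𝕜 _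
  have hbot := boundedOrbits_quotientFamily_eq_bot hρ hn (by positivity) hshort hcontract
  refine Submodule.eq_top_iff'.2 fun x => (Submodule.Quotient.mk_eq_zero _).1 ?_
  refine eq_zero_of_forall_growth hρ hbot fun s hs => ?_
  obtain ⟨C, -, hC⟩ := hgrowth s hs
  refine ⟨C * ‖x‖, fun l => ?_⟩
  calc _ = ‖(boundedOrbits T ρ).mkQL ((l.map T).prod x)‖ :=
        congrArg norm (mkQL_list_prod_apply l x).symm
    _ ≤ ‖(l.map T).prod x‖ := Submodule.Quotient.norm_mk_le _ _
    _ ≤ C * ‖x‖ * s ^ l.length := (hC l x trivial).trans_eq (mul_right_comm _ _ _)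

end Splitting

section ExtremalNorm

variable {𝕜 V ι : Type*} [NontriviallyNormedField 𝕜] [NormedAddCommGroup V] [NormedSpace 𝕜 V]

theorem hasWordGrowth_univ_norm_of_lt {T : ι → V →L[𝕜] V}
    (hT : BddAbove (Set.range fun k => ‖T k‖)) {r : ℝ}
    (hr : jointSpectralRadiusOn Set.univ norm T < r) : HasWordGrowth Set.univ norm T r := by
  obtain ⟨M, hM⟩ := hT
  have hM0 : 0 ≤ max M 0 := le_max_right _ _
  refine HasWordGrowth.of_jointSpectralRadiusOn_lt (fun x _ => norm_nonneg x) hM0 ?_ hr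
  refine .of_apply_le hM0 (fun _ _ _ => trivial) fun k x _ => (T k).le_of_opNorm_le ?_ x
  exact (hM (Set.mem_range_self k)).trans (le_max_left _ _)

theorem le_jointSpectralRadiusOn_boundedOrbits [LocallyCompactSpace 𝕜] [FiniteDimensional 𝕜 V]
    {T : ι → V →L[𝕜] V} (hT : BddAbove (Set.range fun k => ‖T k‖)) {ρ : ℝ}
    (hρ : jointSpectralRadiusOn Set.univ norm T = ρ) (hρ0 : 0 < ρ) :
    ρ ≤ jointSpectralRadiusOn (boundedOrbits T ρ : Set V) (orbitNorm T ρ) T := by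
  by_contra! hlt
  obtain ⟨r, hEr, hrρ⟩ := exists_between hlt
  have hr : 0 ≤ r := (jointSpectralRadiusOn_nonneg _ _ _).trans hEr.le
  have hinv : ∀ k, ∀ x ∈ (boundedOrbits T ρ : Set V), T k x ∈ (boundedOrbits T ρ : Set V) :=
    fun k x hx => apply_mem_boundedOrbits k hx
  have hgrowth : HasWordGrowth (boundedOrbits T ρ : Set V) (orbitNorm T ρ) T r :=
    .of_jointSpectralRadiusOn_lt (fun x _ => orbitNorm_nonneg hρ0.le x) hρ0.le
      (.of_apply_le hρ0.le hinv fun k x hx => orbitNorm_apply_le hρ0 hx k) hEr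
  have : ProperSpace 𝕜 := .of_locallyCompactSpace 𝕜
  have : CompleteSpace (boundedOrbits T ρ) := FiniteDimensional.complete 𝕜 _
  obtain ⟨C, hC, hle⟩ := exists_orbitNorm_le (T := T) hρ0
  have hgrowth' : HasWordGrowth (boundedOrbits T ρ : Set V) norm T r :=
    hgrowth.of_equivalent hr hC one_pos hinv hle fun x hx =>
      (norm_le_orbitNorm hρ0 hx).trans_eq (one_mul _).symm
  have htop := boundedOrbits_eq_top hr hrρ
    (fun s hs => hasWordGrowth_univ_norm_of_lt hT (hρ.trans_lt hs)) hgrowth'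
  rw [htop, Submodule.top_coe] at hgrowth'
  exact (hgrowth'.jointSpectralRadiusOn_le hr).not_gt (hρ ▸ hrρ)

theorem eq_jointSpectralRadiusOn_and_eq_iSup_opNormOn {T : ι → V →L[𝕜] V} {ρ : ℝ} (hρ : 0 ≤ ρ)
    {E : Set V} {N : V → ℝ} (hN : ∀ x ∈ E, 0 ≤ N x) (hE : ∀ k, ∀ x ∈ E, T k x ∈ E)
    (hT : ∀ k, ∀ x ∈ E, N (T k x) ≤ ρ * N x) (hle : ρ ≤ jointSpectralRadiusOn E N T) :
    ρ = jointSpectralRadiusOn E N T ∧ ρ = ⨆ k, opNormOn E N (T k) :=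
  ⟨hle.antisymm ((HasWordGrowth.of_apply_le hρ hE hT).jointSpectralRadiusOn_le hρ),
    (hle.trans (jointSpectralRadiusOn_le_iSup_opNormOn hρ hN hE hT)).antisymm
      (Real.iSup_le (fun k => opNormOn_le hρ (hT k)) hρ)⟩

theorem exists_invariant_subspace_with_extremal_norm_general [LocallyCompactSpace 𝕜]
    [FiniteDimensional 𝕜 V] (T : ι → V →L[𝕜] V) (hT : BddAbove (Set.range fun k => ‖T k‖)) :
    ∃ (E : Submodule 𝕜 V) (N : V → ℝ),
      (∀ k, ∀ x ∈ E, T k x ∈ E) ∧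
      (∀ x ∈ E, 0 ≤ N x) ∧
      (∀ x ∈ E, (N x = 0 ↔ x = 0)) ∧
      (∀ (c : 𝕜), ∀ x ∈ E, N (c • x) = ‖c‖ * N x) ∧
      (∀ x ∈ E, ∀ y ∈ E, N (x + y) ≤ N x + N y) ∧
      jointSpectralRadiusOn Set.univ norm T = jointSpectralRadiusOn (E : Set V) N T ∧
      jointSpectralRadiusOn Set.univ norm T = ⨆ k, opNormOn (E : Set V) N (T k) := by
  obtain ⟨ρ, hρ⟩ : ∃ ρ, jointSpectralRadiusOn Set.univ norm T = ρ := ⟨_, rfl⟩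
  rcases (hρ ▸ jointSpectralRadiusOn_nonneg Set.univ norm T : 0 ≤ ρ).eq_or_lt with rfl | hρ0
  · rw [hρ]
    exact ⟨⊥, norm, by simp, by simp, by simp, fun c x _ => norm_smul c x,
      fun x _ y _ => norm_add_le x y, eq_jointSpectralRadiusOn_and_eq_iSup_opNormOn le_rfl
        (by simp) (by simp) (by simp) (jointSpectralRadiusOn_nonneg _ _ _)⟩
  · have hle := le_jointSpectralRadiusOn_boundedOrbits hT hρ hρ0
    rw [hρ]
    exact ⟨boundedOrbits T ρ, orbitNorm T ρ, fun k x hx => apply_mem_boundedOrbits k hx,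
      fun x _ => orbitNorm_nonneg hρ0.le x, fun x hx => orbitNorm_eq_zero_iff hρ0 hx,
      fun c x _ => orbitNorm_smul c x, fun x hx y hy => orbitNorm_add_le hρ0 hx hy,
      eq_jointSpectralRadiusOn_and_eq_iSup_opNormOn hρ0.le (fun x _ => orbitNorm_nonneg hρ0.le x)
        (fun k x hx => apply_mem_boundedOrbits k hx)
        (fun k x hx => orbitNorm_apply_le hρ0 hx k) hle⟩

end ExtremalNorm

section Matrices

variable {d K : ℕ}

/-- A complex matrix as a continuous linear operator on column vectors. -/
def matrixToCLM : Matrix (Fin d) (Fin d) ℂ ≃ₐ[ℂ] ((Fin d → ℂ) →L[ℂ] (Fin d → ℂ)) :=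
  Matrix.toLinAlgEquiv'.trans (Module.End.toContinuousLinearMap (Fin d → ℂ))

theorem jointSpecRadOn_eq_jointSpectralRadiusOn (E : Set (Fin d → ℂ)) (N : (Fin d → ℂ) → ℝ)
    (S : Fin K → Matrix (Fin d) (Fin d) ℂ) :
    jointSpecRadOn E N S = jointSpectralRadiusOn E N fun k => matrixToCLM (S k) := by
  have hword (n : ℕ) (w : Fin n → Fin K) :
      ((List.ofFn w).map fun k => matrixToCLM (S k)).prod = matrixToCLM (finWordProd S w) := by
    rw [finWordProd, map_list_prod, List.map_ofFn, List.map_ofFn]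
    rfl
  simp only [jointSpectralRadiusOn, hword]
  rfl

end Matrices

/-- There always exists an invariant linear subspace `E ⊆ ℂ^d` and a norm on `E`
which is extremal: `ρ̂(S) = ρ̂(S↾E) = max_k |S_k↾E|`. -/
theorem exists_invariant_subspace_with_extremal_norm
    {d K : ℕ} (hd : 2 ≤ d) (hK : 2 ≤ K)
    (S : Fin K → Matrix (Fin d) (Fin d) ℂ) :
    ∃ (E : Submodule ℂ (Fin d → ℂ)) (Nv : (Fin d → ℂ) → ℝ),
      (∀ k, ∀ x ∈ E, (S k).mulVec x ∈ E) ∧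
      (∀ x ∈ E, 0 ≤ Nv x) ∧
      (∀ x ∈ E, (Nv x = 0 ↔ x = 0)) ∧
      (∀ (c : ℂ), ∀ x ∈ E, Nv (c • x) = ‖c‖ * Nv x) ∧
      (∀ x ∈ E, ∀ y ∈ E, Nv (x + y) ≤ Nv x + Nv y) ∧
      jointSpecRad S = jointSpecRadOn (E : Set (Fin d → ℂ)) Nv S ∧
      jointSpecRad S = ⨆ k : Fin K, relOpNorm (E : Set (Fin d → ℂ)) Nv (S k) := by
  simp only [jointSpecRad, jointSpecRadOn_eq_jointSpectralRadiusOn]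
  exact exists_invariant_subspace_with_extremal_norm_general (fun k => matrixToCLM (S k))
    (Set.finite_range _).bddAbove
end
end
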